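/- arXiv:2010.14614 — 2 statements merged into one kernel-verified Lean document; each statement's English description precedes it below -/
import Mathlib

section
/- Let α < 0, γ < 0 and β ≤ 0, and let (u,v) be a regular solution of the Schrödinger–Korteweg–de Vries system with these parameters. Then for every exponent p₁ with 0 < p₁ < 2/3 and every constant K > 0, liminf_{t→∞} ∫_{{x : |x| ≤ K·t^{p₁}}} ( (∂ₓv(t,x))² + |∂ₓu(t,x)|² ) dx = 0. -/
open MeasureTheory Filter

/-- A regular solution of the Schrödinger–Korteweg–de Vries system
    `i ∂ₜu + ∂ₓ²u = α u v + β u |u|²`,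
    `∂ₜv + ∂ₓ³v + v ∂ₓv = γ ∂ₓ(|u|²)`:
    `u, v` are smooth in `(t,x)`, Schwartz in `x` for each fixed `t`, satisfy the
    equations pointwise, and have uniformly-in-time bounded `H¹ₓ` norms. -/
def IsSKdVSolution (α β γ : ℝ) (u : ℝ → ℝ → ℂ) (v : ℝ → ℝ → ℝ) : Prop :=
  ContDiff ℝ (⊤ : ℕ∞) (fun p : ℝ × ℝ => u p.1 p.2) ∧
  ContDiff ℝ (⊤ : ℕ∞) (fun p : ℝ × ℝ => v p.1 p.2) ∧
  (∀ t : ℝ, ∃ f : SchwartzMap ℝ ℂ, ∀ x, f x = u t x) ∧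
  (∀ t : ℝ, ∃ g : SchwartzMap ℝ ℝ, ∀ x, g x = v t x) ∧
  (∀ t x : ℝ,
    Complex.I * deriv (fun s => u s x) t + iteratedDeriv 2 (u t) x
      = (α : ℂ) * u t x * (v t x : ℂ) + (β : ℂ) * u t x * (‖u t x‖ : ℂ) ^ 2) ∧
  (∀ t x : ℝ,
    deriv (fun s => v s x) t + iteratedDeriv 3 (v t) x + v t x * deriv (v t) x
      = γ * deriv (fun y => ‖u t y‖ ^ 2) x) ∧
  (∃ C : ℝ, ∀ t : ℝ,
    (∫ x : ℝ, ‖u t x‖ ^ 2) + (∫ x : ℝ, ‖deriv (u t) x‖ ^ 2) +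
      (∫ x : ℝ, (v t x) ^ 2) + (∫ x : ℝ, (deriv (v t) x) ^ 2) ≤ C)

open scoped ContDiff

def Sm (f : ℝ → ℝ → ℝ) : Prop := ContDiff ℝ ∞ (fun p : ℝ × ℝ => f p.1 p.2)
noncomputable def Dx (f : ℝ → ℝ → ℝ) : ℝ → ℝ → ℝ := fun t x => deriv (f t) x
noncomputable def Dt (f : ℝ → ℝ → ℝ) : ℝ → ℝ → ℝ := fun t x => deriv (fun s => f s x) t

namespace Sm
variable {f g : ℝ → ℝ → ℝ}

lemma hasFD (hf : Sm f) (p : ℝ × ℝ) : HasFDerivAt (fun p : ℝ × ℝ => f p.1 p.2)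
    (fderiv ℝ (fun p : ℝ × ℝ => f p.1 p.2) p) p :=
  ((ContDiff.differentiable hf (by simp)) p).hasFDerivAt

lemma hx' (hf : Sm f) (t x : ℝ) :
    HasDerivAt (f t) (fderiv ℝ (fun p : ℝ × ℝ => f p.1 p.2) (t, x) (0, 1)) x := by
  have h1 : HasDerivAt (fun y : ℝ => ((t, y) : ℝ × ℝ)) (0, 1) x :=
    (hasDerivAt_const x t).prodMk (hasDerivAt_id x)
  exact (hf.hasFD (t, x)).comp_hasDerivAt x h1

lemma ht' (hf : Sm f) (t x : ℝ) :
    HasDerivAt (fun s => f s x) (fderiv ℝ (fun p : ℝ × ℝ => f p.1 p.2) (t, x) (1, 0)) t := by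
  have h1 : HasDerivAt (fun y : ℝ => ((y, x) : ℝ × ℝ)) (1, 0) t :=
    (hasDerivAt_id t).prodMk (hasDerivAt_const t x)
  exact (hf.hasFD (t, x)).comp_hasDerivAt t h1

lemma dx_eq (hf : Sm f) (t x : ℝ) :
    Dx f t x = fderiv ℝ (fun p : ℝ × ℝ => f p.1 p.2) (t, x) (0, 1) := (hf.hx' t x).deriv
lemma dt_eq (hf : Sm f) (t x : ℝ) :
    Dt f t x = fderiv ℝ (fun p : ℝ × ℝ => f p.1 p.2) (t, x) (1, 0) := (hf.ht' t x).deriv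

lemma hx (hf : Sm f) (t x : ℝ) : HasDerivAt (f t) (Dx f t x) x := by
  rw [hf.dx_eq]; exact hf.hx' t x
lemma ht (hf : Sm f) (t x : ℝ) : HasDerivAt (fun s => f s x) (Dt f t x) t := by
  rw [hf.dt_eq]; exact hf.ht' t x

lemma dx (hf : Sm f) : Sm (Dx f) := by
  have : (fun p : ℝ × ℝ => Dx f p.1 p.2) =
      fun p => fderiv ℝ (fun p : ℝ × ℝ => f p.1 p.2) p (0, 1) := by
    ext p; exact hf.dx_eq p.1 p.2
  unfold Sm
  rw [this]
  exact (ContDiff.fderiv_right hf (m := ∞) (by simp)).clm_apply contDiff_const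
lemma dt (hf : Sm f) : Sm (Dt f) := by
  have : (fun p : ℝ × ℝ => Dt f p.1 p.2) =
      fun p => fderiv ℝ (fun p : ℝ × ℝ => f p.1 p.2) p (1, 0) := by
    ext p; exact hf.dt_eq p.1 p.2
  unfold Sm
  rw [this]
  exact (ContDiff.fderiv_right hf (m := ∞) (by simp)).clm_apply contDiff_const

lemma comm (hf : Sm f) (t x : ℝ) : Dt (Dx f) t x = Dx (Dt f) t x := by
  rw [hf.dx.dt_eq, hf.dt.dx_eq]
  have h1 : (fun p : ℝ × ℝ => Dx f p.1 p.2) =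
      fun p => fderiv ℝ (fun p : ℝ × ℝ => f p.1 p.2) p (0, 1) := by
    ext p; exact hf.dx_eq p.1 p.2
  have h2 : (fun p : ℝ × ℝ => Dt f p.1 p.2) =
      fun p => fderiv ℝ (fun p : ℝ × ℝ => f p.1 p.2) p (1, 0) := by
    ext p; exact hf.dt_eq p.1 p.2
  have hd : DifferentiableAt ℝ (fderiv ℝ (fun p : ℝ × ℝ => f p.1 p.2)) (t, x) :=
    ((ContDiff.fderiv_right hf (m := ∞) (by simp)).differentiable (by simp)) _
  rw [h1, h2, fderiv_clm_apply hd (by fun_prop), fderiv_clm_apply hd (by fun_prop)]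
  have := (ContDiff.contDiffAt hf (x := (t, x))).isSymmSndFDerivAt
    (by simp only [minSmoothness_of_isRCLikeNormedField]; exact WithTop.coe_le_coe.2 le_top)
  simpa using this (1, 0) (0, 1)

lemma cont (hf : Sm f) : Continuous (fun p : ℝ × ℝ => f p.1 p.2) := ContDiff.continuous hf
lemma add (hf : Sm f) (hg : Sm g) : Sm (fun t x => f t x + g t x) := ContDiff.add hf hg
lemma sub (hf : Sm f) (hg : Sm g) : Sm (fun t x => f t x - g t x) := ContDiff.sub hf hg
lemma mul (hf : Sm f) (hg : Sm g) : Sm (fun t x => f t x * g t x) := ContDiff.mul hf hg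
lemma pow (hf : Sm f) (n : ℕ) : Sm (fun t x => f t x ^ n) := ContDiff.pow hf n
lemma const (c : ℝ) : Sm (fun _ _ => c) := contDiff_const
lemma ofx {w : ℝ → ℝ} (hw : ContDiff ℝ ∞ w) : Sm (fun _ x => w x) := hw.comp contDiff_snd

lemma contx (hf : Sm f) (t : ℝ) : Continuous (f t) :=
  hf.cont.comp (by fun_prop : Continuous fun x : ℝ => ((t, x) : ℝ × ℝ))

lemma div (hf : Sm f) (hg : Sm g) (T S a b : ℝ) :
    (∫ t in T..S, ∫ x in a..b, (Dt f t x + Dx g t x)) =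
      ((((∫ t in T..S, g t b) - ∫ t in T..S, g t a) +
        ∫ x in a..b, f S x) - ∫ x in a..b, f T x) := by
  have := MeasureTheory.integral2_divergence_prod_of_hasFDerivAt_off_countable
    (fun p : ℝ × ℝ => f p.1 p.2) (fun p : ℝ × ℝ => g p.1 p.2) 
    (fderiv ℝ (fun p : ℝ × ℝ => f p.1 p.2)) (fderiv ℝ (fun p : ℝ × ℝ => g p.1 p.2))
    T a S b ∅ (by simp) hf.cont.continuousOn hg.cont.continuousOn 
    (fun p _ => hf.hasFD p) (fun p _ => hg.hasFD p) ?_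
  · simp only [hf.dt_eq, hg.dx_eq]; exact this
  · apply ContinuousOn.integrableOn_compact
    · exact isCompact_uIcc.prod isCompact_uIcc
    · have h1 := ContDiff.continuous (ContDiff.fderiv_right hf (m := ∞) (by simp))
      have h2 := ContDiff.continuous (ContDiff.fderiv_right hg (m := ∞) (by simp))
      exact ((h1.clm_apply continuous_const).add (h2.clm_apply continuous_const)).continuousOn
end Sm

lemma bump_exists : ∃ (A : ℝ) (f f1 f2 f3 : ℝ → ℝ), 1 ≤ A ∧ ContDiff ℝ ∞ f ∧ ContDiff ℝ ∞ f1 ∧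
    ContDiff ℝ ∞ f2 ∧ ContDiff ℝ ∞ f3 ∧
    (∀ x, HasDerivAt f (f1 x) x) ∧ (∀ x, HasDerivAt f1 (f2 x) x) ∧ (∀ x, HasDerivAt f2 (f3 x) x) ∧
    (∀ x, 3 ≤ |x| → f x = 0 ∧ f1 x = 0 ∧ f2 x = 0) ∧
    (∀ x, |f x| ≤ A) ∧ (∀ x, |f1 x| ≤ A) ∧ (∀ x, |f2 x| ≤ A) ∧ (∀ x, |f3 x| ≤ A) ∧
    (∀ x, 0 ≤ f x) ∧ (∀ x, |x| ≤ 1 → f x = 1) := by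
  let b : ContDiffBump (0 : ℝ) := ⟨1, 2, by norm_num, by norm_num⟩
  have hs : ∀ n : ℕ, ContDiff ℝ ∞ (iteratedDeriv n b) := fun n => by
    have := b.contDiff (n := ⊤)
    rw [contDiff_infty] 
    intro m
    exact (contDiff_infty.1 this (m + n)).iterate_deriv' m n |> fun h => by
      rw [iteratedDeriv_eq_iterate]; exact h
  have hd : ∀ n : ℕ, ∀ x, HasDerivAt (iteratedDeriv n b) (iteratedDeriv (n+1) b x) x := fun n x => by
    rw [iteratedDeriv_succ]
    exact ((hs n).differentiable (by simp) x).hasDerivAt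
  have hz : ∀ n : ℕ, ∀ x : ℝ, 2 < |x| → iteratedDeriv n b x = 0 := by
    intro n
    induction n with
    | zero => 
      intro x hx
      simp only [iteratedDeriv_zero]
      exact b.zero_of_le_dist (by simpa [b] using hx.le)
    | succ n ih =>
      intro x hx
      rw [iteratedDeriv_succ]
      have : (iteratedDeriv n b) =ᶠ[nhds x] fun _ => 0 := by
        filter_upwards [(isOpen_lt continuous_const continuous_abs).mem_nhds hx] with y hy
        exact ih y hy
      rw [this.deriv_eq]; simp
  have hb : ∀ n : ℕ, ∃ C, ∀ x, |iteratedDeriv n b x| ≤ C := by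
    intro n
    obtain ⟨C, hC⟩ := (isCompact_Icc (a := (-2:ℝ)) (b := 2)).exists_bound_of_continuousOn
      (hs n).continuous.continuousOn
    refine ⟨max C 0, fun x => ?_⟩
    by_cases hx : |x| ≤ 2
    · exact (hC x (abs_le.1 hx)).trans (le_max_left _ _)
    · rw [hz n x (not_le.1 hx)]; simp
  obtain ⟨C0, h0⟩ := hb 0
  obtain ⟨C1, h1⟩ := hb 1
  obtain ⟨C2, h2⟩ := hb 2
  obtain ⟨C3, h3⟩ := hb 3
  have p0 := (abs_nonneg _).trans (h0 0)
  have p1 := (abs_nonneg _).trans (h1 0)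
  have p2 := (abs_nonneg _).trans (h2 0)
  have p3 := (abs_nonneg _).trans (h3 0)
  refine ⟨1 + C0 + C1 + C2 + C3, iteratedDeriv 0 b, iteratedDeriv 1 b, iteratedDeriv 2 b,
    iteratedDeriv 3 b, by linarith, hs 0, hs 1, hs 2, hs 3, hd 0, hd 1, hd 2, ?_, ?_, ?_, ?_, ?_, ?_, ?_⟩
  · intro x hx
    exact ⟨hz 0 x (by linarith), hz 1 x (by linarith), hz 2 x (by linarith)⟩
  · intro x; linarith [h0 x]
  · intro x; linarith [h1 x]
  · intro x; linarith [h2 x]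
  · intro x; linarith [h3 x]
  · intro x; simp only [iteratedDeriv_zero]; exact b.nonneg
  · intro x hx; simp only [iteratedDeriv_zero]
    exact b.one_of_mem_closedBall (by simpa [b] using hx)

lemma arctan_facts : ∃ (g1 g2 g3 : ℝ → ℝ), ContDiff ℝ ∞ Real.arctan ∧ ContDiff ℝ ∞ g1 ∧
    ContDiff ℝ ∞ g2 ∧ ContDiff ℝ ∞ g3 ∧
    (∀ x, HasDerivAt Real.arctan (g1 x) x) ∧ (∀ x, HasDerivAt g1 (g2 x) x) ∧
    (∀ x, HasDerivAt g2 (g3 x) x) ∧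
    (∀ x, |Real.arctan x| ≤ 8) ∧ (∀ x, |g1 x| ≤ 8) ∧ (∀ x, |g2 x| ≤ 8) ∧ (∀ x, |g3 x| ≤ 8) ∧
    (∀ x, 0 ≤ g1 x) ∧ (∀ x, |x| ≤ 1 → 1/2 ≤ g1 x) := by
  have hp : ∀ x : ℝ, 0 < 1 + x^2 := fun x => by positivity
  refine ⟨fun x => 1 / (1+x^2), fun x => -(2*x)/(1+x^2)^2, fun x => (6*x^2-2)/(1+x^2)^3,
    Real.contDiff_arctan, ?_, ?_, ?_, Real.hasDerivAt_arctan, ?_, ?_, ?_, ?_, ?_, ?_, ?_, ?_⟩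
  · exact contDiff_const.div (by fun_prop) (fun x => (hp x).ne')
  · exact ContDiff.div (by fun_prop) (by fun_prop) (fun x => (pow_pos (hp x) 2).ne')
  · exact ContDiff.div (by fun_prop) (by fun_prop) (fun x => (pow_pos (hp x) 3).ne')
  · intro x
    have h : HasDerivAt (fun x : ℝ => 1 + x^2) (2*x) x := by
      simpa using (hasDerivAt_pow 2 x).const_add 1
    have h3 := (hasDerivAt_const x (1:ℝ)).div h (hp x).ne'
    exact h3.congr_deriv (by simp)
  · intro x
    have h : HasDerivAt (fun x : ℝ => 1 + x^2) (2*x) x := by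
      simpa using (hasDerivAt_pow 2 x).const_add 1
    have h2 : HasDerivAt (fun x : ℝ => -(2*x)) (-2) x := by
      have h4 := ((hasDerivAt_id x).const_mul 2).neg
      exact h4.congr_deriv (by simp)
    have h3 := h2.div (h.pow 2) (pow_pos (hp x) 2).ne'
    refine h3.congr_deriv ?_
    have := (hp x).ne'
    simp
    field_simp
    ring
  · intro x
    have := Real.neg_pi_div_two_lt_arctan x
    have := Real.arctan_lt_pi_div_two x
    have := Real.pi_le_four
    rw [abs_le]; constructor <;> linarith
  · intro x
    rw [abs_of_pos (by have := hp x; positivity), div_le_iff₀ (hp x)]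
    nlinarith [sq_nonneg x]
  · intro x
    rw [abs_div, abs_of_pos (pow_pos (hp x) 2), div_le_iff₀ (pow_pos (hp x) 2), abs_le]
    constructor <;> nlinarith [sq_nonneg x, sq_nonneg (x^2), sq_nonneg (x-1), sq_nonneg (x+1)]
  · intro x
    rw [abs_div, abs_of_pos (pow_pos (hp x) 3), div_le_iff₀ (pow_pos (hp x) 3), abs_le]
    have : (0:ℝ) ≤ x^4 := by positivity
    have : (0:ℝ) ≤ x^6 := by positivity
    constructor <;> nlinarith [sq_nonneg x]
  · intro x; have := hp x; positivity
  · intro x hx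
    have : x^2 ≤ 1 := by rw [← sq_abs]; nlinarith [abs_nonneg x]
    apply one_div_le_one_div_of_le (hp x); linarith

lemma prod_bound {a b A B : ℝ} (ha : |a| ≤ A) (hb : |b| ≤ B) : |a * b| ≤ A * B := by
  rw [abs_mul]; exact mul_le_mul ha hb (abs_nonneg _) ((abs_nonneg _).trans ha)

lemma weight_exists : ∃ A : ℝ, 1 ≤ A ∧ ∀ l m : ℝ, 1 ≤ l → l ≤ m →
    ∃ w w1 w2 w3 P : ℝ → ℝ, ContDiff ℝ ∞ w ∧ ContDiff ℝ ∞ w1 ∧ ContDiff ℝ ∞ w2 ∧ ContDiff ℝ ∞ w3 ∧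
    ContDiff ℝ ∞ P ∧
    (∀ x, HasDerivAt w (w1 x) x) ∧ (∀ x, HasDerivAt w1 (w2 x) x) ∧ (∀ x, HasDerivAt w2 (w3 x) x) ∧
    (∀ x, |x| = 3 * m → w x = 0 ∧ w1 x = 0 ∧ w2 x = 0) ∧
    (∀ x, |w x| ≤ A) ∧ (∀ x, |w3 x| ≤ A / l ^ 3) ∧ (∀ x, |w1 x - P x| ≤ A / m) ∧
    (∀ x, 0 ≤ P x) ∧ (∀ x, |x| ≤ l → 1 / (2 * l) ≤ P x) := by
  obtain ⟨A, f, f1, f2, f3, hA, cf, cf1, cf2, cf3, df, df1, df2, zf, bf, bf1, bf2, bf3, pf, of⟩ :=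
    bump_exists
  obtain ⟨g1, g2, g3, cg, cg1, cg2, cg3, dg, dg1, dg2, bg, bg1, bg2, bg3, pg, og⟩ := arctan_facts
  refine ⟨64 * A, by linarith, fun l m hl hlm => ?_⟩
  have hl0 : 0 < l := by linarith
  have hm0 : 0 < m := by linarith
  have sc : ∀ {h : ℝ → ℝ} (c : ℝ), ContDiff ℝ ∞ h → ContDiff ℝ ∞ (fun x => h (x / c)) :=
    fun c hh => hh.comp (contDiff_id.div_const c)
  have sd : ∀ {h h' : ℝ → ℝ} (c : ℝ), (∀ x, HasDerivAt h (h' x) x) →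
      ∀ x, HasDerivAt (fun x => h (x / c)) (h' (x / c) * (1 / c)) x :=
    fun c hh x => (hh (x / c)).comp x ((hasDerivAt_id x).div_const c)
  refine ⟨fun x => Real.arctan (x / l) * f (x / m),
    fun x => (1/l) * (g1 (x / l) * f (x / m)) + (1/m) * (Real.arctan (x / l) * f1 (x / m)),
    fun x => (1/l)^2 * (g2 (x / l) * f (x / m)) + 2 * (1/l) * (1/m) * (g1 (x / l) * f1 (x / m))
      + (1/m)^2 * (Real.arctan (x / l) * f2 (x / m)),
    fun x => (1/l)^3 * (g3 (x / l) * f (x / m)) + 3 * (1/l)^2 * (1/m) * (g2 (x / l) * f1 (x / m))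
      + 3 * (1/l) * (1/m)^2 * (g1 (x / l) * f2 (x / m)) 
      + (1/m)^3 * (Real.arctan (x / l) * f3 (x / m)),
    fun x => (1/l) * (g1 (x / l) * f (x / m)), ?_, ?_, ?_, ?_, ?_, ?_, ?_, ?_, ?_, ?_, ?_, ?_, ?_, ?_⟩
  · exact (sc l cg).mul (sc m cf)
  · exact (contDiff_const.mul ((sc l cg1).mul (sc m cf))).add
      (contDiff_const.mul ((sc l cg).mul (sc m cf1)))
  · exact ((contDiff_const.mul ((sc l cg2).mul (sc m cf))).add
      (contDiff_const.mul ((sc l cg1).mul (sc m cf1)))).add 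
      (contDiff_const.mul ((sc l cg).mul (sc m cf2)))
  · exact (((contDiff_const.mul ((sc l cg3).mul (sc m cf))).add
      (contDiff_const.mul ((sc l cg2).mul (sc m cf1)))).add 
      (contDiff_const.mul ((sc l cg1).mul (sc m cf2)))).add
      (contDiff_const.mul ((sc l cg).mul (sc m cf3)))
  · exact (contDiff_const.mul ((sc l cg1).mul (sc m cf)))
  · intro x
    have h := (sd l dg x).mul (sd m df x)
    exact h.congr_deriv (by ring)
  · intro x
    have h := (((sd l dg1 x).mul (sd m df x)).const_mul (1/l)).add
      (((sd l dg x).mul (sd m df1 x)).const_mul (1/m))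
    exact h.congr_deriv (by ring)
  · intro x
    have h := ((((sd l dg2 x).mul (sd m df x)).const_mul ((1/l)^2)).add
      (((sd l dg1 x).mul (sd m df1 x)).const_mul (2 * (1/l) * (1/m)))).add
      (((sd l dg x).mul (sd m df2 x)).const_mul ((1/m)^2))
    exact h.congr_deriv (by ring)
  · intro x hx
    have h3 : 3 ≤ |x / m| := by
      rw [abs_div, abs_of_pos hm0, hx, mul_div_assoc, div_self hm0.ne']; norm_num
    obtain ⟨e0, e1, e2⟩ := zf _ h3
    simp [e0, e1, e2]
  · intro x
    have := prod_bound (bg (x/l)) (bf (x/m))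
    linarith
  · intro x
    have hml : 1/m ≤ 1/l := one_div_le_one_div_of_le hl0 hlm
    have hm1 : 0 ≤ 1/m := by positivity
    have hl1 : 0 ≤ 1/l := by positivity
    generalize 1/m = M at *
    have e : 64 * A / l^3 = (1/l)^3 * (64 * A) := by field_simp
    rw [e]
    generalize 1/l = L at *
    have q1 := prod_bound (bg3 (x/l)) (bf (x/m))
    have q2 := prod_bound (bg2 (x/l)) (bf1 (x/m))
    have q3 := prod_bound (bg1 (x/l)) (bf2 (x/m))
    have q4 := prod_bound (bg (x/l)) (bf3 (x/m))
    have r1 : L^2 * M ≤ L^3 := by nlinarith [pow_nonneg hl1 2]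
    have r2 : L * M^2 ≤ L^3 := by
      have : M^2 ≤ L^2 := by gcongr
      nlinarith
    have r3 : M^3 ≤ L^3 := by gcongr
    have tri : ∀ {c a B : ℝ}, 0 ≤ c → c ≤ L^3 → |a| ≤ B → |c * a| ≤ L^3 * B := by
      intro c a B hc hcL ha
      rw [abs_mul, abs_of_nonneg hc]
      exact mul_le_mul hcL ha (abs_nonneg _) (by positivity)
    have s1 := tri (by positivity) le_rfl q1
    have s2 := tri (by positivity) r1 q2
    have s3 := tri (by positivity) r2 q3
    have s4 := tri (by positivity) r3 q4
    rw [abs_le] at *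
    constructor <;> linarith [s1.1, s1.2, s2.1, s2.2, s3.1, s3.2, s4.1, s4.2]
  · intro x
    simp only [add_sub_cancel_left]
    rw [abs_mul, abs_of_pos (by positivity : 0 < 1/m)]
    have := prod_bound (bg (x/l)) (bf1 (x/m))
    calc 1/m * _ ≤ 1/m * (64 * A) := by gcongr; linarith
      _ = _ := by ring
  · intro x
    have := pf (x/m); have := pg (x/l)
    positivity
  · intro x hx
    have h1 : |x / l| ≤ 1 := by rw [abs_div, abs_of_pos hl0, div_le_one hl0]; exact hx
    have h2 : |x / m| ≤ 1 := by
      rw [abs_div, abs_of_pos hm0, div_le_one hm0]; exact hx.trans hlm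
    beta_reduce
    rw [of _ h2, mul_one]
    have := og _ h1
    calc 1 / (2*l) = 1/l * (1/2) := by field_simp
      _ ≤ _ := by gcongr

structure Sys (α β γ : ℝ) (a b v : ℝ → ℝ → ℝ) : Prop where
  sa : Sm a
  sb : Sm b
  sv : Sm v
  ea : ∀ t x, Dt a t x = -Dx (Dx b) t x + α * b t x * v t x + β * b t x * (a t x ^ 2 + b t x ^ 2)
  eb : ∀ t x, Dt b t x = Dx (Dx a) t x - α * a t x * v t x - β * a t x * (a t x ^ 2 + b t x ^ 2)
  ev : ∀ t x, Dt v t x = -Dx (Dx (Dx v)) t x - v t x * Dx v t x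
    + γ * (2 * a t x * Dx a t x + 2 * b t x * Dx b t x)

namespace Sys
variable {α β γ : ℝ} {a b v : ℝ → ℝ → ℝ} {w w1 w2 w3 : ℝ → ℝ}

lemma id1 (h : Sys α β γ a b v) (cw : ContDiff ℝ ∞ w) (cw1 : ContDiff ℝ ∞ w1) (cw2 : ContDiff ℝ ∞ w2)
    (dw : ∀ x, HasDerivAt w (w1 x) x) (dw1 : ∀ x, HasDerivAt w1 (w2 x) x)
    (dw2 : ∀ x, HasDerivAt w2 (w3 x) x) (T S R : ℝ)
    (z : ∀ x, |x| = |R| → w x = 0 ∧ w1 x = 0 ∧ w2 x = 0) :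
    (∫ t in T..S, ∫ x in (-R)..R,
      (v t x * w3 x + (1/2 * v t x ^ 2 - γ * (a t x ^ 2 + b t x ^ 2)) * w1 x)) =
    (∫ x in (-R)..R, v S x * w x) - ∫ x in (-R)..R, v T x * w x := by
  have sa := h.sa
  have sb := h.sb
  have sv := h.sv
  have sw : Sm (fun _ x => w x) := Sm.ofx cw
  have sw1 : Sm (fun _ x => w1 x) := Sm.ofx cw1
  have sw2 : Sm (fun _ x => w2 x) := Sm.ofx cw2
  have hF : Sm (fun t x => v t x * w x) := sv.mul sw
  have hG : Sm (fun t x => Dx (Dx v) t x * w x - Dx v t x * w1 x + v t x * w2 x 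
      + (1/2 * v t x ^ 2 - γ * (a t x ^ 2 + b t x ^ 2)) * w x) := 
    ((((sv.dx.dx).mul sw).sub (sv.dx.mul sw1)).add (sv.mul sw2)).add
      ((((Sm.const (1/2)).mul (sv.pow 2)).sub
        ((Sm.const γ).mul ((sa.pow 2).add (sb.pow 2)))).mul sw)
  have key := Sm.div hF hG T S (-R) R
  obtain ⟨z0, z1, z2⟩ := z R rfl
  obtain ⟨y0, y1, y2⟩ := z (-R) (abs_neg R)
  simp only [z0, z1, z2, y0, y1, y2, mul_zero, sub_zero, add_zero, intervalIntegral.integral_zero,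
    zero_add] at key
  rw [← key]
  congr 1; ext t; congr 1; ext x
  have e1 : Dt (fun t x => v t x * w x) t x = Dt v t x * w x :=
    ((sv.ht t x).mul_const (w x)).deriv
  have e2 := ((((((sv.dx.dx.hx t x).mul (dw x)).sub ((sv.dx.hx t x).mul (dw1 x))).add
    ((sv.hx t x).mul (dw2 x))).add (((((sv.hx t x).pow 2).const_mul (1/2)).sub
      ((((sa.hx t x).pow 2).add ((sb.hx t x).pow 2)).const_mul γ)).mul (dw x)))).deriv
  rw [e1]
  refine Eq.trans ?_ (congrArg (fun z => Dt v t x * w x + z) e2.symm)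
  simp only [Pi.add_apply, Pi.sub_apply, Pi.pow_apply, h.ev]
  ring

lemma id2 (h : Sys α β γ a b v) (cw : ContDiff ℝ ∞ w) (cw1 : ContDiff ℝ ∞ w1) (cw2 : ContDiff ℝ ∞ w2)
    (dw : ∀ x, HasDerivAt w (w1 x) x) (dw1 : ∀ x, HasDerivAt w1 (w2 x) x)
    (dw2 : ∀ x, HasDerivAt w2 (w3 x) x) (T S R : ℝ)
    (z : ∀ x, |x| = |R| → w x = 0 ∧ w1 x = 0 ∧ w2 x = 0) :
    (∫ t in T..S, ∫ x in (-R)..R,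
      ((-(3 * α) * Dx v t x ^ 2 - 4 * γ * (Dx a t x ^ 2 + Dx b t x ^ 2) 
        + (2/3 * α * v t x ^ 3 - γ * β * (a t x ^ 2 + b t x ^ 2) ^ 2
        - 2 * α * γ * v t x * (a t x ^ 2 + b t x ^ 2))) * w1 x
        + (α * v t x ^ 2 + γ * (a t x ^ 2 + b t x ^ 2)) * w3 x)) =
    (∫ x in (-R)..R, (α * v S x ^ 2 - 2 * γ * (a S x * Dx b S x - b S x * Dx a S x)) * w x) -
     ∫ x in (-R)..R, (α * v T x ^ 2 - 2 * γ * (a T x * Dx b T x - b T x * Dx a T x)) * w x := by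
  have sa := h.sa
  have sb := h.sb
  have sv := h.sv
  have sw : Sm (fun _ x => w x) := Sm.ofx cw
  have sw1 : Sm (fun _ x => w1 x) := Sm.ofx cw1
  have sw2 : Sm (fun _ x => w2 x) := Sm.ofx cw2
  have hF : Sm (fun t x => (α * v t x ^ 2 - 2 * γ * (a t x * Dx b t x - b t x * Dx a t x)) * w x) :=
    (((Sm.const α).mul (sv.pow 2)).sub ((Sm.const (2 * γ)).mul
      ((sa.mul sb.dx).sub (sb.mul sa.dx)))).mul sw
  have hG : Sm (fun t x => 
      ((-(3 * α)) * Dx v t x ^ 2 - 4 * γ * (Dx a t x ^ 2 + Dx b t x ^ 2) 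
        + (2/3 * α * v t x ^ 3 - γ * β * (a t x ^ 2 + b t x ^ 2) ^ 2
        - 2 * α * γ * v t x * (a t x ^ 2 + b t x ^ 2))
        + (2 * α * (v t x * Dx (Dx v) t x + Dx v t x ^ 2)
          + 2 * γ * (a t x * Dx (Dx a) t x + b t x * Dx (Dx b) t x + Dx a t x ^ 2 + Dx b t x ^ 2)))
        * w x
      - (2 * α * (v t x * Dx v t x) + 2 * γ * (a t x * Dx a t x + b t x * Dx b t x)) * w1 x
      + (α * v t x ^ 2 + γ * (a t x ^ 2 + b t x ^ 2)) * w2 x) := by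
    have hr := (sa.pow 2).add (sb.pow 2)
    refine Sm.add (Sm.sub (Sm.mul ?_ sw) (Sm.mul ?_ sw1)) (Sm.mul ?_ sw2)
    · refine Sm.add (Sm.add (Sm.sub ((Sm.const _).mul (sv.dx.pow 2)) 
        ((Sm.const _).mul ((sa.dx.pow 2).add (sb.dx.pow 2)))) (Sm.sub (Sm.sub 
         ((Sm.const _).mul (sv.pow 3)) ((Sm.const _).mul (hr.pow 2)))
         (Sm.mul ((Sm.const _).mul sv) hr))) (Sm.add ((Sm.const _).mul ((sv.mul sv.dx.dx).add
           (sv.dx.pow 2))) ((Sm.const _).mul ((((sa.mul sa.dx.dx).add (sb.mul sb.dx.dx)).add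
             (sa.dx.pow 2)).add (sb.dx.pow 2))))
    · exact ((Sm.const _).mul (sv.mul sv.dx)).add 
        ((Sm.const _).mul ((sa.mul sa.dx).add (sb.mul sb.dx)))
    · exact ((Sm.const _).mul (sv.pow 2)).add ((Sm.const _).mul hr)
  have key := Sm.div hF hG T S (-R) R
  obtain ⟨z0, z1, z2⟩ := z R rfl
  obtain ⟨y0, y1, y2⟩ := z (-R) (abs_neg R)
  simp only [z0, z1, z2, y0, y1, y2, mul_zero, sub_zero, add_zero, intervalIntegral.integral_zero,
    zero_add] at key
  rw [← key]
  congr 1; ext t; congr 1; ext x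
  have hat : Dt (Dx a) t x = -Dx (Dx (Dx b)) t x + α * (Dx b t x * v t x + b t x * Dx v t x)
      + β * (Dx b t x * (a t x ^ 2 + b t x ^ 2) 
        + b t x * (2 * a t x * Dx a t x + 2 * b t x * Dx b t x)) := by
    rw [sa.comm]
    have : Dt a = fun t x => -Dx (Dx b) t x + α * b t x * v t x 
      + β * b t x * (a t x ^ 2 + b t x ^ 2) := by ext t x; exact h.ea t x
    rw [this]
    have e := (((sb.dx.dx.hx t x).neg.add (((sb.hx t x).const_mul α).mul (sv.hx t x))).add
      (((sb.hx t x).const_mul β).mul (((sa.hx t x).pow 2).add ((sb.hx t x).pow 2)))).deriv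
    refine Eq.trans e ?_
    simp only [Pi.add_apply, Pi.pow_apply]
    ring
  have hbt : Dt (Dx b) t x = Dx (Dx (Dx a)) t x - α * (Dx a t x * v t x + a t x * Dx v t x)
      - β * (Dx a t x * (a t x ^ 2 + b t x ^ 2) 
        + a t x * (2 * a t x * Dx a t x + 2 * b t x * Dx b t x)) := by
    rw [sb.comm]
    have : Dt b = fun t x => Dx (Dx a) t x - α * a t x * v t x 
      - β * a t x * (a t x ^ 2 + b t x ^ 2) := by ext t x; exact h.eb t x
    rw [this]
    have e := (((sa.dx.dx.hx t x).sub (((sa.hx t x).const_mul α).mul (sv.hx t x))).sub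
      (((sa.hx t x).const_mul β).mul (((sa.hx t x).pow 2).add ((sb.hx t x).pow 2)))).deriv
    refine Eq.trans e ?_
    simp only [Pi.add_apply, Pi.pow_apply]
    ring
  have e1 := (((((sv.ht t x).pow 2).const_mul α).sub ((((sa.ht t x).mul (sb.dx.ht t x)).sub
    ((sb.ht t x).mul (sa.dx.ht t x))).const_mul (2 * γ))).mul_const (w x)).deriv
  have hr := ((sa.hx t x).pow 2).add ((sb.hx t x).pow 2)
  have e2 := (((((((sv.dx.hx t x).pow 2).const_mul (-(3 * α))).sub 
      ((((sa.dx.hx t x).pow 2).add ((sb.dx.hx t x).pow 2)).const_mul (4 * γ))).add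
      (((((sv.hx t x).pow 3).const_mul (2/3*α)).sub ((hr.pow 2).const_mul (γ * β))).sub
        (((sv.hx t x).const_mul (2 * α * γ)).mul hr))).add
      (((((sv.hx t x).mul (sv.dx.dx.hx t x)).add ((sv.dx.hx t x).pow 2)).const_mul (2 * α)).add 
       ((((((sa.hx t x).mul (sa.dx.dx.hx t x)).add ((sb.hx t x).mul (sb.dx.dx.hx t x))).add
        ((sa.dx.hx t x).pow 2)).add ((sb.dx.hx t x).pow 2)).const_mul (2 * γ)))).mul (dw x)).sub
      (((((sv.hx t x).mul (sv.dx.hx t x)).const_mul (2 * α)).add 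
      ((((sa.hx t x).mul (sa.dx.hx t x)).add ((sb.hx t x).mul (sb.dx.hx t x))).const_mul (2 * γ))).mul
       (dw1 x)) |>.add (((((sv.hx t x).pow 2).const_mul α).add (hr.const_mul γ)).mul (dw2 x)) |>.deriv
  refine Eq.trans ?_ (congrArg₂ (fun y z => y + z) e1.symm e2.symm)
  simp only [Pi.add_apply, Pi.sub_apply, Pi.mul_apply, Pi.pow_apply, h.ev, hat, hbt, h.ea, h.eb]
  ring
end Sys

noncomputable def I2 (T S R : ℝ) (f : ℝ → ℝ → ℝ) : ℝ := ∫ t in T..S, ∫ x in (-R)..R, f t x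

def Cn (f : ℝ → ℝ → ℝ) : Prop := Continuous (fun p : ℝ × ℝ => f p.1 p.2)

namespace Cn
variable {f g : ℝ → ℝ → ℝ}
lemma inner (hf : Cn f) (R : ℝ) : Continuous (fun t => ∫ x in (-R)..R, f t x) :=
  intervalIntegral.continuous_parametric_intervalIntegral_of_continuous' hf _ _
lemma sec (hf : Cn f) (t : ℝ) : Continuous (f t) :=
  Continuous.comp (g := fun p : ℝ × ℝ => f p.1 p.2) hf
    (by fun_prop : Continuous fun x : ℝ => ((t, x) : ℝ × ℝ))
lemma add (hf : Cn f) (hg : Cn g) : Cn (fun t x => f t x + g t x) := Continuous.add hf hg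
lemma smul (hf : Cn f) (c : ℝ) : Cn (fun t x => c * f t x) := Continuous.mul continuous_const hf
end Cn

lemma I2_add {f g : ℝ → ℝ → ℝ} (hf : Cn f) (hg : Cn g) (T S R : ℝ) :
    I2 T S R (fun t x => f t x + g t x) = I2 T S R f + I2 T S R g := by
  unfold I2
  rw [← intervalIntegral.integral_add ((hf.inner R).intervalIntegrable _ _)
    ((hg.inner R).intervalIntegrable _ _)]
  congr 1; ext t
  exact intervalIntegral.integral_add ((hf.sec t).intervalIntegrable _ _)
    ((hg.sec t).intervalIntegrable _ _)

lemma I2_smul (f : ℝ → ℝ → ℝ) (c T S R : ℝ) :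
    I2 T S R (fun t x => c * f t x) = c * I2 T S R f := by
  unfold I2
  simp only [intervalIntegral.integral_const_mul]

lemma I2_mono {f g : ℝ → ℝ → ℝ} (hf : Cn f) (hg : Cn g) {T S R : ℝ} (hT : T ≤ S) (hR : 0 ≤ R)
    (h : ∀ t x, f t x ≤ g t x) : I2 T S R f ≤ I2 T S R g := by
  unfold I2
  apply intervalIntegral.integral_mono hT ((hf.inner R).intervalIntegrable _ _)
    ((hg.inner R).intervalIntegrable _ _)
  intro t
  exact intervalIntegral.integral_mono (by linarith) ((hf.sec t).intervalIntegrable _ _)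
    ((hg.sec t).intervalIntegrable _ _) (fun x => h t x)

lemma I2_main {f H g e : ℝ → ℝ → ℝ} (hf : Cn f) (hH : Cn H) (hg : Cn g) (he : Cn e)
    {T S R L k k0 C : ℝ} (hT : T ≤ S) (hR : 0 ≤ R) (hk : 0 ≤ k)
    (hC : ∀ t, ∫ x in (-R)..R, e t x ≤ C)
    (h : ∀ t x, f t x ≤ H t x + L * g t x + k * e t x + k0) :
    I2 T S R f ≤ I2 T S R H + L * I2 T S R g + (S - T) * (k * C + 2 * R * k0) := by
  have c0 : Cn (fun _ _ => k0) := continuous_const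
  have h1 := I2_mono hf (((hH.add (hg.smul L)).add (he.smul k)).add c0) hT hR h
  rw [I2_add ((hH.add (hg.smul L)).add (he.smul k)) c0, I2_add (hH.add (hg.smul L)) (he.smul k),
    I2_add hH (hg.smul L), I2_smul, I2_smul] at h1
  have h2 : I2 T S R e ≤ (S - T) * C := by
    have := intervalIntegral.integral_mono (μ := volume) hT ((he.inner R).intervalIntegrable T S)
      ((continuous_const (y := C)).intervalIntegrable T S) hC
    simpa [I2] using this
  have h3 : I2 T S R (fun _ _ => k0) = (S - T) * (2 * R * k0) := by
    simp [I2]; ring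
  nlinarith [mul_le_mul_of_nonneg_left h2 hk]

lemma bdry {f e : ℝ → ℝ} (hf : Continuous f) (he : Continuous e) {R k k0 C : ℝ} (hR : 0 ≤ R)
    (hk : 0 ≤ k) (hC : ∫ x in (-R)..R, e x ≤ C) (h : ∀ x, |f x| ≤ k * e x + k0) :
    |∫ x in (-R)..R, f x| ≤ k * C + 2 * R * k0 := by
  calc |∫ x in (-R)..R, f x| ≤ ∫ x in (-R)..R, |f x| :=
        intervalIntegral.abs_integral_le_integral_abs (by linarith)
    _ ≤ ∫ x in (-R)..R, (k * e x + k0) := 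
        intervalIntegral.integral_mono (by linarith) (hf.abs.intervalIntegrable _ _)
          (((continuous_const.mul he).add continuous_const).intervalIntegrable _ _) h
    _ = k * (∫ x in (-R)..R, e x) + 2 * R * k0 := by
        rw [intervalIntegral.integral_add (f := fun x => k * e x)
          ((continuous_const.mul he).intervalIntegrable _ _)
          (continuous_const.intervalIntegrable _ _), intervalIntegral.integral_const_mul]
        simp; ring_nf; simp
    _ ≤ _ := by gcongr

lemma pw1 {γ c1 P y2 r rest e s A l3 m W1 W3 y : ℝ} (hγ : γ < 0) (hc1 : c1 ≤ 1/2) (hc1b : c1 ≤ -γ)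
    (hP : 0 ≤ P) (hy2 : 0 ≤ y2) (hr : 0 ≤ r) (hrest : 0 ≤ rest) (he : e = y2 + r + rest)
    (hye : |y| ≤ 1/2 * (s * e + 1/s)) (bw3 : |W3| ≤ A / l3) (bwP : |W1 - P| ≤ A / m) :
    c1 * (P * (y2 + r)) ≤ y * W3 + (1/2 * y2 - γ * r) * W1 + 0 * 0 
      + (A / l3 * (s/2) + A/m * (1/2-γ)) * e + A / l3 * (1/2 * (1/s)) := by
  have q1 := prod_bound hye bw3
  have n1 := mul_nonneg (by linarith : 0 ≤ -γ) hr
  have n2 := mul_nonneg (by linarith : 0 ≤ -γ) hy2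
  have n3 := mul_nonneg (by linarith : 0 ≤ -γ) hrest
  have q0 : 0 ≤ 1/2 * y2 - γ * r := by linarith
  have q0' : 1/2 * y2 - γ * r ≤ (1/2-γ) * e := by rw [he]; linarith
  have q2 := prod_bound (le_of_eq_of_le (abs_of_nonneg q0) q0') bwP
  have q3 : c1 * (y2 + r) ≤ 1/2 * y2 - γ * r := by
    have := mul_le_mul_of_nonneg_right hc1 hy2
    have := mul_le_mul_of_nonneg_right hc1b hr
    linarith
  have q4 := mul_le_mul_of_nonneg_left q3 hP
  have q1' := (abs_le.1 q1).1
  have q2' := (abs_le.1 q2).1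
  linarith

lemma pwE {α γ y2 vx r rx mm : ℝ} (hα : α < 0) (hγ : γ < 0) (hy : 0 ≤ y2) (hv : 0 ≤ vx)
    (hr : 0 ≤ r) (hrx : 0 ≤ rx) (m1 : |mm| ≤ 1/2 * (r + rx)) :
    |α * y2 - 2 * γ * mm| ≤ (-(3*α) - 4*γ) * (y2 + r + (vx + rx)) := by
  have m1' := abs_le.1 m1
  have a0 : 0 ≤ -α := by linarith
  have g0 : 0 ≤ -γ := by linarith
  have g1 := mul_le_mul_of_nonneg_left m1'.1 g0
  have g2 := mul_le_mul_of_nonneg_left m1'.2 g0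
  have := mul_nonneg a0 hy
  have := mul_nonneg a0 hv
  have := mul_nonneg a0 hr
  have := mul_nonneg a0 hrx
  have := mul_nonneg g0 hy
  have := mul_nonneg g0 hv
  have := mul_nonneg g0 hr
  have := mul_nonneg g0 hrx
  rw [abs_le]
  constructor <;> linarith

lemma pw2 {α β γ c2 M A m l3 P W1 W3 y r rx vx : ℝ} (hα : α < 0) (hγ : γ < 0)
    (hc2a : c2 ≤ -(3*α)) (hc2b : c2 ≤ -(4*γ)) (hM0 : 0 ≤ M) (hA : 0 ≤ A) (hm : 0 < m)
    (hw1 : |W1 - P| ≤ A / m) (hw3 : |W3| ≤ A / l3) (hP : 0 ≤ P) (hvM : |y| ≤ M) (hrM : r ≤ M)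
    (r0 : 0 ≤ r) (rx0 : 0 ≤ rx) (vx0 : 0 ≤ vx) :
    c2 * (P * (vx + rx)) ≤ (-(3 * α) * vx - 4 * γ * rx 
        + (2/3 * α * y ^ 3 - γ * β * r ^ 2 - 2 * α * γ * y * r)) * W1
        + (α * y ^ 2 + γ * r) * W3 
      + (2/3 * |α| + |γ*β| + |2*α*γ|) * M * (P * (y^2 + r))
      + (A / m * ((-(3*α) - 4*γ) + (2/3 * |α| + |γ*β| + |2*α*γ|) * M) 
        + A / l3 * (-(3*α) - 4*γ)) * (y^2 + r + (vx + rx)) + 0 := by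
  have y0 := sq_nonneg y
  have a0 : 0 ≤ -α := by linarith
  have g0 : 0 ≤ -γ := by linarith
  have n1 := mul_nonneg a0 y0
  have n2 := mul_nonneg a0 vx0
  have n3 := mul_nonneg a0 r0
  have n4 := mul_nonneg a0 rx0
  have n5 := mul_nonneg g0 y0
  have n6 := mul_nonneg g0 vx0
  have n7 := mul_nonneg g0 r0
  have n8 := mul_nonneg g0 rx0
  have k1 : 0 ≤ -(3 * α) * vx - 4 * γ * rx := by linarith
  have k2 : -(3 * α) * vx - 4 * γ * rx ≤ (-(3*α) - 4*γ) * (y^2 + r + (vx + rx)) := by linarith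
  have k3 : c2 * (vx + rx) ≤ -(3 * α) * vx - 4 * γ * rx := by
    have := mul_le_mul_of_nonneg_right hc2a vx0
    have := mul_le_mul_of_nonneg_right hc2b rx0
    linarith
  have k3' := mul_le_mul_of_nonneg_left k3 hP
  have Q1 := prod_bound (le_of_eq_of_le (abs_of_nonneg k1) k2) hw1
  have Q2 : |α * y^2 + γ * r| ≤ (-(3*α) - 4*γ) * (y^2 + r + (vx + rx)) := by
    rw [abs_le]; constructor <;> linarith
  have Q2' := prod_bound Q2 hw3
  set L := (2/3 * |α| + |γ*β| + |2*α*γ|) * M with hL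
  have hL0 : 0 ≤ L := by positivity
  have q : |2/3 * α * y^3 - γ * β * r^2 - 2 * α * γ * y * r| ≤ L * (y^2 + r) := by
    have t1 : |2/3 * α * y^3| ≤ 2/3 * |α| * M * (y^2+r) := by
      have e3 : |y^3| = |y| * y^2 := by rw [← sq_abs y, abs_pow]; ring
      have : |2/3 * α * y^3| = 2/3 * |α| * (|y| * y^2) := by
        rw [abs_mul, abs_mul, e3, abs_of_pos (by norm_num : (0:ℝ) < 2/3)]
      rw [this, mul_assoc (2/3 * |α|)]
      gcongr; linarith
    have t2 : |γ * β * r^2| ≤ |γ * β| * M * (y^2+r) := by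
      rw [abs_mul, abs_of_nonneg (sq_nonneg r), pow_two, mul_assoc |γ*β|]
      gcongr; linarith
    have t3 : |2 * α * γ * y * r| ≤ |2 * α * γ| * M * (y^2+r) := by
      rw [abs_mul, abs_mul, abs_of_nonneg r0]
      gcongr; linarith
    have t1' := abs_le.1 t1
    have t2' := abs_le.1 t2
    have t3' := abs_le.1 t3
    rw [hL, abs_le]
    constructor <;> linarith [t1'.1, t1'.2, t2'.1, t2'.2, t3'.1, t3'.2]
  generalize 2/3 * α * y^3 - γ * β * r^2 - 2 * α * γ * y * r = qq at *
  have hw1' : |W1| ≤ P + A/m := by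
    rw [abs_le] at hw1 ⊢; constructor <;> linarith [hw1.1, hw1.2]
  have Q3 := prod_bound q hw1'
  have Q4 : L * (y^2+r) * (A/m) ≤ L * (y^2 + r + (vx + rx)) * (A/m) := by
    have : y^2 + r ≤ y^2 + r + (vx + rx) := by linarith
    gcongr
  have z1 := (abs_le.1 Q1).1
  have z2 := (abs_le.1 Q2').1
  have z3 := (abs_le.1 Q3).1
  linarith

namespace Sys
variable {α β γ : ℝ} {a b v : ℝ → ℝ → ℝ}

noncomputable def en (a b v : ℝ → ℝ → ℝ) : ℝ → ℝ → ℝ := fun t x =>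
  v t x ^ 2 + (a t x ^ 2 + b t x ^ 2) + (Dx v t x ^ 2 + (Dx a t x ^ 2 + Dx b t x ^ 2))

set_option maxHeartbeats 1000000 in
lemma est (h : Sys α β γ a b v) (hα : α < 0) (hγ : γ < 0) {C M : ℝ} (hC0 : 0 ≤ C) (hM0 : 0 ≤ M)
    (hC : ∀ t R, 0 ≤ R → ∫ x in (-R)..R, en a b v t x ≤ C)
    (hv : ∀ t x, |v t x| ≤ M) (hr : ∀ t x, a t x ^ 2 + b t x ^ 2 ≤ M) :
    ∃ D : ℝ, 0 ≤ D ∧ ∀ l m T S : ℝ, 1 ≤ l → l ≤ m → T ≤ S → ∃ P : ℝ → ℝ, Continuous P ∧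
      (∀ x, 0 ≤ P x) ∧ (∀ x, |x| ≤ l → 1 / (2 * l) ≤ P x) ∧
      I2 T S (3 * m) (fun t x => P x * (Dx v t x ^ 2 + (Dx a t x ^ 2 + Dx b t x ^ 2))) ≤
        D * (√m + (S - T) * (√m / l ^ 3 + 1 / m)) := by
  obtain ⟨A, hA, hW⟩ := weight_exists
  have ca := h.sa.cont
  have cb := h.sb.cont
  have cv := h.sv.cont
  have cax := h.sa.dx.cont
  have cbx := h.sb.dx.cont
  have cvx := h.sv.dx.cont
  obtain ⟨c1, hc1, hc1a, hc1b⟩ : ∃ c > 0, c ≤ 1/2 ∧ c ≤ -γ :=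
    ⟨min (1/2) (-γ), lt_min (by norm_num) (by linarith), min_le_left _ _, min_le_right _ _⟩
  obtain ⟨c2, hc2, hc2a, hc2b⟩ : ∃ c > 0, c ≤ -(3*α) ∧ c ≤ -(4*γ) :=
    ⟨min (-(3*α)) (-(4*γ)), lt_min (by linarith) (by linarith), min_le_left _ _, min_le_right _ _⟩
  set D0 := -(3*α) - 4*γ with hD0
  set L := (2/3 * |α| + |γ*β| + |2*α*γ|) * M with hL
  have hL0 : 0 ≤ L := by positivity
  have hD00 : 0 ≤ D0 := by linarith
  set D1 := A * (C+6) + A * (C/2+3) + A * (1/2-γ) * C with hD1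
  set D2 := 2 * A * D0 * C + C * A * (2 * D0 + L) with hD2
  have hγ2 : 0 ≤ 1/2 - γ := by linarith
  have hA0 : 0 ≤ A := by linarith
  refine ⟨(D2 + L * (D1 / c1)) / c2, by positivity, fun l m T S hl hlm hTS => ?_⟩
  obtain ⟨w, w1, w2, w3, P, cw, cw1, cw2, cw3, cP, dw, dw1, dw2, zw, bw, bw3, bwP, pP, oP⟩ := 
    hW l m hl hlm
  refine ⟨P, cP.continuous, pP, oP, ?_⟩
  have hm0 : 0 < m := by linarith
  have hl0 : 0 < l := by linarith
  have zw' : ∀ x, |x| = |3 * m| → w x = 0 ∧ w1 x = 0 ∧ w2 x = 0 := by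
    rw [abs_of_pos (by positivity : 0 < 3 * m)]; exact zw
  have i1 := h.id1 cw cw1 cw2 dw dw1 dw2 T S (3*m) zw'
  have i2 := h.id2 cw cw1 cw2 dw dw1 dw2 T S (3*m) zw'
  have hR : 0 ≤ 3 * m := by positivity
  set s := √m with hs
  have hs1 : 1 ≤ s := Real.one_le_sqrt.2 (by linarith)
  have hs0 : 0 < s := by linarith
  have hsm : s ^ 2 = m := Real.sq_sqrt hm0.le
  have Dw := cw.continuous
  have Dw1 := cw1.continuous
  have Dw3 := cw3.continuous
  have DP := cP.continuous
  have he : Cn (en a b v) := by unfold Cn en; fun_prop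
  have hr0 : ∀ t x, 0 ≤ a t x ^ 2 + b t x ^ 2 := fun t x => by positivity
  have hrx0 : ∀ t x, 0 ≤ Dx a t x ^ 2 + Dx b t x ^ 2 := fun t x => by positivity
  have young : ∀ y : ℝ, |y| ≤ 1/2 * (s * y^2 + 1/s) := by
    intro y
    rw [← sq_abs y]
    have : 1/2 * (s * |y|^2 + 1/s) - |y| = (s * |y| - 1)^2 / (2*s) := by field_simp; ring
    have : 0 ≤ (s * |y| - 1)^2 / (2*s) := by positivity
    linarith
  have hve : ∀ t x, v t x ^ 2 ≤ en a b v t x := fun t x => by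
    unfold en; linarith [hr0 t x, hrx0 t x, sq_nonneg (Dx v t x)]
  have hye : ∀ t x, |v t x| ≤ 1/2 * (s * en a b v t x + 1/s) := fun t x => by
    have := young (v t x)
    have := mul_le_mul_of_nonneg_left (hve t x) hs0.le
    linarith
  -- step 1
  have st1 := I2_main (f := fun t x => c1 * (P x * (v t x ^ 2 + (a t x ^ 2 + b t x ^ 2))))
    (H := fun t x => v t x * w3 x + (1/2 * v t x ^ 2 - γ * (a t x ^ 2 + b t x ^ 2)) * w1 x)
    (g := fun _ _ => 0) (e := en a b v) (L := 0) (k := A / l^3 * (s/2) + A/m * (1/2-γ))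
    (k0 := A / l^3 * (1/2 * (1/s)))
    (by unfold Cn; fun_prop) (by unfold Cn; fun_prop) (by unfold Cn; fun_prop) he hTS hR
    (by positivity) (fun t => hC t _ hR) ?_
  swap
  · intro t x
    have := pw1 (y2 := v t x ^ 2) (r := a t x ^ 2 + b t x ^ 2)
      (rest := Dx v t x ^ 2 + (Dx a t x ^ 2 + Dx b t x ^ 2)) hγ hc1a hc1b (pP x) (sq_nonneg _)
      (hr0 t x) (add_nonneg (sq_nonneg _) (hrx0 t x)) rfl (hye t x) (bw3 x) (bwP x)
    exact this
  have b1 : ∀ t, |∫ x in (-(3*m))..(3*m), v t x * w x| ≤ (A * (s/2)) * C + 2*(3*m) * (A * (1/2 * (1/s))) := by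
    intro t
    refine bdry (e := en a b v t) ((h.sv.contx t).mul Dw) (he.sec t) hR (by positivity) (hC t _ hR) ?_
    intro x
    have := prod_bound (hye t x) (bw x)
    change |v t x * w x| ≤ _
    linarith
  unfold I2 at st1
  rw [i1] at st1
  have b1S := (abs_le.1 (b1 S)).2
  have b1T := (abs_le.1 (b1 T)).1
  change I2 T S (3*m) _ ≤ _ at st1
  rw [I2_smul] at st1
  set X := I2 T S (3*m) (fun t x => P x * (v t x ^ 2 + (a t x ^ 2 + b t x ^ 2))) with hX
  set τ := S - T with hτ
  have hτ0 : 0 ≤ τ := by linarith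
  set B := s + τ * (s / l^3 + 1/m) with hB
  have hms : m * (1/s) = s := by rw [← hsm]; field_simp
  have hsl : 0 ≤ s / l^3 := by positivity
  have hm1 : 0 ≤ 1 / m := by positivity
  have hX1 : c1 * X ≤ D1 * B := by
    have e1 : A / l^3 * (s/2) + A/m * (1/2-γ) = (A/2) * (s/l^3) + A * (1/2-γ) * (1/m) := by ring
    have e2 : 2 * (3*m) * (A / l^3 * (1/2 * (1/s))) = 3 * A * (s / l^3) := by
      calc _ = 3 * A / l^3 * (m * (1/s)) := by ring
        _ = _ := by rw [hms]; ring
    have e3 : 2*(3*m) * (A * (1/2 * (1/s))) = 3 * A * s := by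
      calc _ = 3 * A * (m * (1/s)) := by ring
        _ = _ := by rw [hms]
    rw [e1, e2] at st1
    rw [e3] at b1S b1T
    have : c1 * X ≤ A * (C+6) * s + τ * (A * (C/2+3) * (s/l^3) + A * (1/2-γ) * C * (1/m)) := by
      linarith
    have p1 : 0 ≤ A * (C+6) := by positivity
    have p2 : 0 ≤ A * (C/2+3) := by positivity
    have p3 : 0 ≤ A * (1/2-γ) * C := by positivity
    refine this.trans ?_
    rw [hD1, hB]
    have u1 : A * (C+6) * s ≤ (A * (C + 6) + A * (C / 2 + 3) + A * (1 / 2 - γ) * C) * s := by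
      gcongr; linarith
    have u2 : A * (C/2+3) * (s/l^3) ≤ (A * (C + 6) + A * (C / 2 + 3) + A * (1 / 2 - γ) * C) * (s/l^3) := by
      gcongr; linarith
    have u3 : A * (1/2-γ) * C * (1/m) ≤ (A * (C + 6) + A * (C / 2 + 3) + A * (1 / 2 - γ) * C) * (1/m) := by
      gcongr; linarith
    have u4 := mul_le_mul_of_nonneg_left (add_le_add u2 u3) hτ0
    linarith
  -- step 2
  have st2 := I2_main (f := fun t x => c2 * (P x * (Dx v t x ^ 2 + (Dx a t x ^ 2 + Dx b t x ^ 2))))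
    (H := fun t x => ((-(3 * α) * Dx v t x ^ 2 - 4 * γ * (Dx a t x ^ 2 + Dx b t x ^ 2) 
        + (2/3 * α * v t x ^ 3 - γ * β * (a t x ^ 2 + b t x ^ 2) ^ 2
        - 2 * α * γ * v t x * (a t x ^ 2 + b t x ^ 2))) * w1 x
        + (α * v t x ^ 2 + γ * (a t x ^ 2 + b t x ^ 2)) * w3 x))
    (g := fun t x => P x * (v t x ^ 2 + (a t x ^ 2 + b t x ^ 2))) (e := en a b v) (L := L) 
    (k := A / m * (D0 + L) + A / l^3 * D0)
    (k0 := 0)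
    (by unfold Cn; fun_prop) (by unfold Cn; fun_prop) (by unfold Cn; fun_prop) he hTS hR
    (by positivity) (fun t => hC t _ hR) ?_
  swap
  · intro t x
    exact pw2 hα hγ hc2a hc2b hM0 hA0 hm0 (bwP x) (bw3 x) (pP x) (hv t x) (hr t x) (hr0 t x)
      (hrx0 t x) (sq_nonneg _)
  have b2 : ∀ t, |∫ x in (-(3*m))..(3*m), (α * v t x ^ 2 - 2 * γ * (a t x * Dx b t x - b t x * Dx a t x)) * w x|
      ≤ (D0 * A) * C + 2*(3*m) * 0 := by
    intro t
    have ua := h.sa.contx t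
    have ub := h.sb.contx t
    have uv := h.sv.contx t
    have uax := h.sa.dx.contx t
    have ubx := h.sb.dx.contx t
    refine bdry (e := en a b v t) (by fun_prop) (he.sec t) hR (by positivity) (hC t _ hR) ?_
    intro x
    have : |α * v t x ^ 2 - 2 * γ * (a t x * Dx b t x - b t x * Dx a t x)| ≤ D0 * en a b v t x := by
      have m1 : |a t x * Dx b t x - b t x * Dx a t x| ≤ 
          1/2 * (a t x ^ 2 + b t x ^ 2 + (Dx a t x ^ 2 + Dx b t x ^ 2)) := by
        rw [abs_le]
        constructor <;> nlinarith [sq_nonneg (a t x - Dx b t x), sq_nonneg (a t x + Dx b t x),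
          sq_nonneg (b t x - Dx a t x), sq_nonneg (b t x + Dx a t x)]
      exact pwE hα hγ (sq_nonneg _) (sq_nonneg _) (hr0 t x) (hrx0 t x) m1
    have := prod_bound this (bw x)
    linarith
  have b2S := (abs_le.1 (b2 S)).2
  have b2T := (abs_le.1 (b2 T)).1
  have st2' : I2 T S (3*m) (fun t x => c2 * (P x * (Dx v t x ^ 2 + (Dx a t x ^ 2 + Dx b t x ^ 2)))) ≤
      2 * (D0 * A * C) + L * X + τ * ((A / m * (D0 + L) + A / l^3 * D0) * C) := by
    refine st2.trans ?_
    have : I2 T S (3*m) (fun t x => ((-(3 * α) * Dx v t x ^ 2 - 4 * γ * (Dx a t x ^ 2 + Dx b t x ^ 2) 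
        + (2/3 * α * v t x ^ 3 - γ * β * (a t x ^ 2 + b t x ^ 2) ^ 2
        - 2 * α * γ * v t x * (a t x ^ 2 + b t x ^ 2))) * w1 x
        + (α * v t x ^ 2 + γ * (a t x ^ 2 + b t x ^ 2)) * w3 x)) ≤ 2 * (D0 * A * C) := by
      unfold I2; rw [i2]; linarith
    linarith
  rw [I2_smul] at st2'
  set Y := I2 T S (3*m) (fun t x => P x * (Dx v t x ^ 2 + (Dx a t x ^ 2 + Dx b t x ^ 2))) with hY
  have hX2 : X ≤ D1 / c1 * B := by
    rw [div_mul_eq_mul_div, le_div_iff₀ hc1]; linarith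
  have hY2 : c2 * Y ≤ (D2 + L * (D1 / c1)) * B := by
    have f1 := mul_le_mul_of_nonneg_left hX2 hL0
    have f2 : 2 * (D0 * A * C) + τ * ((A / m * (D0 + L) + A / l^3 * D0) * C) ≤ D2 * B := by
      have e1 : (A / m * (D0 + L) + A / l^3 * D0) * C =
        C * A * (D0 + L) * (1/m) + C * A * D0 * (1/l^3) := by ring
      have e2 : 1/l^3 ≤ s/l^3 := by gcongr
      have v1 : 2 * (D0 * A * C) ≤ D2 * s := by
        have : 2 * (D0 * A * C) ≤ D2 := by
          have : 0 ≤ C * A * (2 * D0 + L) := by positivity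
          rw [hD2]; linarith
        have : D2 * 1 ≤ D2 * s := by gcongr
        linarith
      have v2 : C * A * (D0 + L) * (1/m) ≤ D2 * (1/m) := by
        gcongr
        have : 0 ≤ 2 * A * D0 * C := by positivity
        have : 0 ≤ C * A * D0 := by positivity
        rw [hD2]; linarith
      have v3 : C * A * D0 * (1/l^3) ≤ D2 * (s/l^3) := by
        have : 0 ≤ 2 * A * D0 * C := by positivity
        have : 0 ≤ C * A * D0 := by positivity
        have : 0 ≤ C * A * L := by positivity
        have : C * A * D0 ≤ D2 := by rw [hD2]; linarith
        gcongr
      rw [e1, hB]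
      have := mul_le_mul_of_nonneg_left (add_le_add v2 v3) hτ0
      linarith
    linarith
  rw [div_mul_eq_mul_div, le_div_iff₀ hc2]
  linarith
end Sys

lemma hasDeriv_re {h : ℝ → ℂ} {x : ℝ} {z : ℂ} (hd : HasDerivAt h z x) :
    HasDerivAt (fun y => (h y).re) z.re x :=
  (Complex.reCLM.hasFDerivAt.comp_hasDerivAt x hd)

lemma hasDeriv_im {h : ℝ → ℂ} {x : ℝ} {z : ℂ} (hd : HasDerivAt h z x) :
    HasDerivAt (fun y => (h y).im) z.im x :=
  (Complex.imCLM.hasFDerivAt.comp_hasDerivAt x hd)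

lemma normsq_reim (z : ℂ) : ‖z‖ ^ 2 = z.re ^ 2 + z.im ^ 2 := by
  rw [Complex.sq_norm, Complex.normSq_apply]; ring

lemma sys_of_sol {α β γ : ℝ} {u : ℝ → ℝ → ℂ} {v : ℝ → ℝ → ℝ} (h : IsSKdVSolution α β γ u v) :
    Sys α β γ (fun t x => (u t x).re) (fun t x => (u t x).im) v ∧
    (∀ t x, Dx (fun t x => (u t x).re) t x = (deriv (u t) x).re) ∧
    (∀ t x, Dx (fun t x => (u t x).im) t x = (deriv (u t) x).im) := by
  obtain ⟨hu, hv, -, -, e1, e2, -⟩ := h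
  have sa : Sm (fun t x => (u t x).re) := Complex.reCLM.contDiff.comp hu
  have sb : Sm (fun t x => (u t x).im) := Complex.imCLM.contDiff.comp hu
  have ux : ∀ t, ContDiff ℝ ∞ (u t) := fun t =>
    ContDiff.comp (g := fun p : ℝ × ℝ => u p.1 p.2) hu (contDiff_const.prodMk contDiff_id)
  have ut : ∀ x, ContDiff ℝ ∞ (fun t => u t x) := fun x =>
    ContDiff.comp (g := fun p : ℝ × ℝ => u p.1 p.2) hu (contDiff_id.prodMk contDiff_const)
  have ux1 : ∀ t, ContDiff ℝ ∞ (deriv (u t)) := fun t => by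
    have := (contDiff_infty_iff_deriv.1 (ux t)).2
    exact this
  have d1 : ∀ t x, HasDerivAt (u t) (deriv (u t) x) x := fun t x =>
    (((ux t).differentiable (by simp)) x).hasDerivAt
  have d2 : ∀ t x, HasDerivAt (deriv (u t)) (deriv (deriv (u t)) x) x := fun t x =>
    (((ux1 t).differentiable (by simp)) x).hasDerivAt
  have dt : ∀ t x, HasDerivAt (fun s => u s x) (deriv (fun s => u s x) t) t := fun t x =>
    (((ut x).differentiable (by simp)) t).hasDerivAt
  have ra : ∀ t x, Dx (fun t x => (u t x).re) t x = (deriv (u t) x).re := fun t x =>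
    (hasDeriv_re (d1 t x)).deriv
  have rb : ∀ t x, Dx (fun t x => (u t x).im) t x = (deriv (u t) x).im := fun t x =>
    (hasDeriv_im (d1 t x)).deriv
  have ra2 : ∀ t x, Dx (Dx (fun t x => (u t x).re)) t x = (deriv (deriv (u t)) x).re := by
    intro t x
    have : Dx (fun t x => (u t x).re) = fun t x => (deriv (u t) x).re := by
      funext t x; exact ra t x
    rw [this]; exact (hasDeriv_re (d2 t x)).deriv
  have rb2 : ∀ t x, Dx (Dx (fun t x => (u t x).im)) t x = (deriv (deriv (u t)) x).im := by
    intro t x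
    have : Dx (fun t x => (u t x).im) = fun t x => (deriv (u t) x).im := by
      funext t x; exact rb t x
    rw [this]; exact (hasDeriv_im (d2 t x)).deriv
  have ta : ∀ t x, Dt (fun t x => (u t x).re) t x = (deriv (fun s => u s x) t).re := fun t x =>
    (hasDeriv_re (dt t x)).deriv
  have tb : ∀ t x, Dt (fun t x => (u t x).im) t x = (deriv (fun s => u s x) t).im := fun t x =>
    (hasDeriv_im (dt t x)).deriv
  have E : ∀ t x, Complex.I * deriv (fun s => u s x) t + deriv (deriv (u t)) x
      = (α : ℂ) * u t x * (v t x : ℂ) + (β : ℂ) * u t x *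
        (((u t x).re ^ 2 + (u t x).im ^ 2 : ℝ) : ℂ) := by
    intro t x
    have := e1 t x
    rw [iteratedDeriv_succ, iteratedDeriv_one] at this
    rw [this, ← normsq_reim]; push_cast; rfl
  refine ⟨⟨sa, sb, hv, ?_, ?_, ?_⟩, ra, rb⟩
  · intro t x
    rw [ta, rb2]
    have := congrArg Complex.im (E t x)
    simp only [Complex.add_im, Complex.mul_im, Complex.mul_re, Complex.I_re, Complex.I_im,
      Complex.ofReal_re, Complex.ofReal_im] at this
    linarith
  · intro t x
    rw [tb, ra2]
    have := congrArg Complex.re (E t x)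
    simp only [Complex.add_re, Complex.mul_im, Complex.mul_re, Complex.I_re, Complex.I_im,
      Complex.ofReal_re, Complex.ofReal_im] at this
    linarith
  · intro t x
    have h2 := e2 t x
    rw [iteratedDeriv_succ, iteratedDeriv_succ, iteratedDeriv_one] at h2
    have h3 : HasDerivAt (fun y => ‖u t y‖ ^ 2) (2 * (u t x).re * (deriv (u t) x).re
        + 2 * (u t x).im * (deriv (u t) x).im) x := by
      have := ((hasDeriv_re (d1 t x)).fun_pow 2).fun_add ((hasDeriv_im (d1 t x)).fun_pow 2)
      simp only [normsq_reim]
      refine this.congr_deriv ?_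
      push_cast; ring
    rw [h3.deriv] at h2
    rw [ra, rb]
    unfold Dt Dx
    have h4 : deriv (fun x => deriv (fun x => deriv (v t) x) x) x = deriv (deriv (deriv (v t))) x := rfl
    linarith

lemma bounds_of_sol {α β γ : ℝ} {u : ℝ → ℝ → ℂ} {v : ℝ → ℝ → ℝ} (h : IsSKdVSolution α β γ u v) :
    ∃ C : ℝ, 0 ≤ C ∧ (∀ t, Integrable (fun x => (deriv (v t) x) ^ 2 + ‖deriv (u t) x‖ ^ 2)) ∧
    (∀ t, ∫ x, ((deriv (v t) x) ^ 2 + ‖deriv (u t) x‖ ^ 2) ≤ C) ∧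
    (∀ t R, 0 ≤ R → ∫ x in (-R)..R, Sys.en (fun t x => (u t x).re) (fun t x => (u t x).im) v t x ≤ C) ∧
    (∀ t x, |v t x| ≤ C + 1) ∧ (∀ t x, (u t x).re ^ 2 + (u t x).im ^ 2 ≤ C + 1) := by
  obtain ⟨S, ra, rb⟩ := sys_of_sol h
  obtain ⟨-, -, hf, hg, -, -, C, hC⟩ := h
  have i1 : ∀ t, Integrable (fun x => ‖u t x‖ ^ 2) ∧ Integrable (fun x => ‖deriv (u t) x‖ ^ 2) := by
    intro t
    obtain ⟨f, hf⟩ := hf t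
    have e : u t = f := (funext hf).symm
    constructor
    · have := f.memLp 2 volume
      rw [e]
      exact (memLp_two_iff_integrable_sq_norm this.1).1 this
    · have := (SchwartzMap.derivCLM ℝ ℂ f).memLp 2 volume
      rw [e]
      exact (memLp_two_iff_integrable_sq_norm this.1).1 this
  have i2 : ∀ t, Integrable (fun x => (v t x) ^ 2) ∧ Integrable (fun x => (deriv (v t) x) ^ 2) := by
    intro t
    obtain ⟨f, hf⟩ := hg t
    have e : v t = f := (funext hf).symm
    constructor
    · have := f.memLp 2 volume
      rw [e]
      exact this.integrable_sq
    · have := (SchwartzMap.derivCLM ℝ ℝ f).memLp 2 volume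
      rw [e]
      exact this.integrable_sq
  have C0 : 0 ≤ C := by
    refine le_trans ?_ (hC 0)
    have n1 : 0 ≤ ∫ x : ℝ, ‖u 0 x‖ ^ 2 := integral_nonneg fun x => by positivity
    have n2 : 0 ≤ ∫ x : ℝ, ‖deriv (u 0) x‖ ^ 2 := integral_nonneg fun x => by positivity
    have n3 : 0 ≤ ∫ x : ℝ, v 0 x ^ 2 := integral_nonneg fun x => by positivity
    have n4 : 0 ≤ ∫ x : ℝ, deriv (v 0) x ^ 2 := integral_nonneg fun x => by positivity
    linarith
  have een : ∀ t x, Sys.en (fun t x => (u t x).re) (fun t x => (u t x).im) v t x =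
      v t x ^ 2 + ‖u t x‖ ^ 2 + (deriv (v t) x ^ 2 + ‖deriv (u t) x‖ ^ 2) := by
    intro t x
    unfold Sys.en
    rw [ra, rb, normsq_reim, normsq_reim]
    rfl
  have een' : ∀ t, Sys.en (fun t x => (u t x).re) (fun t x => (u t x).im) v t = fun x =>
      v t x ^ 2 + ‖u t x‖ ^ 2 + (deriv (v t) x ^ 2 + ‖deriv (u t) x‖ ^ 2) := by
    intro t; funext x; exact een t x
  have ia : ∀ t, Integrable (fun x => (deriv (v t) x) ^ 2 + ‖deriv (u t) x‖ ^ 2) := fun t =>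
    (i2 t).2.add (i1 t).2
  have ib : ∀ t, Integrable (fun x => v t x ^ 2 + ‖u t x‖ ^ 2) := fun t =>
    (i2 t).1.add (i1 t).1
  have ie : ∀ t, Integrable (Sys.en (fun t x => (u t x).re) (fun t x => (u t x).im) v t) := by
    intro t; rw [een' t]; exact (ib t).add (ia t)
  have en0 : ∀ t x, 0 ≤ Sys.en (fun t x => (u t x).re) (fun t x => (u t x).im) v t x := by
    intro t x; rw [een]; positivity
  have tot : ∀ t, ∫ x, Sys.en (fun t x => (u t x).re) (fun t x => (u t x).im) v t x ≤ C := by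
    intro t
    rw [een' t, integral_add (ib t) (ia t), integral_add (i2 t).1 (i1 t).1,
      integral_add (i2 t).2 (i1 t).2]
    linarith [hC t]
  have sup : ∀ t x, v t x ^ 2 + ((u t x).re ^ 2 + (u t x).im ^ 2) ≤ C := by
    intro t x
    set a : ℝ → ℝ → ℝ := fun t x => (u t x).re with ha
    set b : ℝ → ℝ → ℝ := fun t x => (u t x).im with hb
    have hd : ∀ y, HasDerivAt (fun y => v t y ^ 2 + (a t y ^ 2 + b t y ^ 2))
        (2 * v t y * Dx v t y + (2 * a t y * Dx a t y + 2 * b t y * Dx b t y)) y := by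
      intro y
      have := ((S.sv.hx t y).fun_pow 2).fun_add (((S.sa.hx t y).fun_pow 2).fun_add
        ((S.sb.hx t y).fun_pow 2))
      refine this.congr_deriv ?_
      push_cast; ring
    have le : ∀ y, |2 * v t y * Dx v t y + (2 * a t y * Dx a t y + 2 * b t y * Dx b t y)| ≤
        Sys.en a b v t y := by
      intro y
      unfold Sys.en
      rw [abs_le]
      constructor <;> nlinarith [sq_nonneg (v t y - Dx v t y), sq_nonneg (a t y - Dx a t y),
        sq_nonneg (b t y - Dx b t y), sq_nonneg (v t y + Dx v t y), sq_nonneg (a t y + Dx a t y),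
        sq_nonneg (b t y + Dx b t y)]
    have id : Integrable (fun y => 2 * v t y * Dx v t y +
        (2 * a t y * Dx a t y + 2 * b t y * Dx b t y)) := by
      refine (ie t).mono' ?_ (Filter.Eventually.of_forall le)
      have h1 := S.sv.contx t
      have h2 := S.sa.contx t
      have h3 := S.sb.contx t
      have h4 := S.sv.dx.contx t
      have h5 := S.sa.dx.contx t
      have h6 := S.sb.dx.contx t
      exact Continuous.aestronglyMeasurable (by fun_prop)
    have iF : Integrable (fun y => v t y ^ 2 + (a t y ^ 2 + b t y ^ 2)) := by
      refine (ib t).congr (Filter.Eventually.of_forall fun y => ?_)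
      show v t y ^ 2 + ‖u t y‖ ^ 2 = _
      rw [normsq_reim]
    have lim := tendsto_zero_of_hasDerivAt_of_integrableOn_Iic (a := x)
      (fun y _ => hd y) id.integrableOn iF.integrableOn
    have ii := integral_Iic_of_hasDerivAt_of_tendsto' (a := x)
      (fun y _ => hd y) id.integrableOn lim
    rw [sub_zero] at ii
    show v t x ^ 2 + (a t x ^ 2 + b t x ^ 2) ≤ C
    rw [← ii]
    calc _ ≤ ∫ y in Set.Iic x, Sys.en a b v t y :=
          integral_mono id.integrableOn (ie t).integrableOn fun y => (le_abs_self _).trans (le y)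
      _ ≤ ∫ y, Sys.en a b v t y :=
          setIntegral_le_integral (ie t) (Filter.Eventually.of_forall (en0 t))
      _ ≤ C := tot t
  refine ⟨C, C0, ia, ?_, ?_, ?_, ?_⟩
  · intro t
    refine le_trans (integral_mono (ia t) (ie t) fun x => ?_) (tot t)
    show _ ≤ Sys.en _ _ v t x
    rw [een]
    have : 0 ≤ v t x ^ 2 + ‖u t x‖ ^ 2 := by positivity
    linarith
  · intro t R hR
    rw [intervalIntegral.integral_of_le (by linarith)]
    exact (setIntegral_le_integral (ie t) (Filter.Eventually.of_forall (en0 t))).trans (tot t)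
  · intro t x
    refine abs_le_of_sq_le_sq (b := C + 1) ?_ (by linarith)
    nlinarith [sup t x, sq_nonneg (u t x).re, sq_nonneg (u t x).im]
  · intro t x
    nlinarith [sup t x, sq_nonneg (v t x)]

theorem skdv_H1_decay_beta_nonpos (α β γ : ℝ) (hα : α < 0) (hγ : γ < 0) (hβ : β ≤ 0)
    (u : ℝ → ℝ → ℂ) (v : ℝ → ℝ → ℝ) (hsol : IsSKdVSolution α β γ u v)
    (p₁ K : ℝ) (hp₁ : 0 < p₁) (hp₁' : p₁ < 2 / 3) (hK : 0 < K) :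
    liminf (fun t : ℝ =>
        ∫ x in {x : ℝ | |x| ≤ K * t ^ p₁},
          ((deriv (v t) x) ^ 2 + ‖deriv (u t) x‖ ^ 2)) atTop = 0 := by
  obtain ⟨S, ra, rb⟩ := sys_of_sol hsol
  obtain ⟨C, C0, hint, hle, hen, hvM, hrM⟩ := bounds_of_sol hsol
  obtain ⟨D, D0, hD⟩ := S.est hα hγ C0 (M := C + 1) (by linarith) hen hvM hrM
  set a : ℝ → ℝ → ℝ := fun t x => (u t x).re with ha
  set b : ℝ → ℝ → ℝ := fun t x => (u t x).im with hb
  set w : ℝ → ℝ → ℝ := fun t x => Dx v t x ^ 2 + (Dx a t x ^ 2 + Dx b t x ^ 2) with hw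
  have hwe : ∀ t, (fun x => (deriv (v t) x) ^ 2 + ‖deriv (u t) x‖ ^ 2) = w t := by
    intro t; funext x
    simp only [hw]
    rw [ra, rb, normsq_reim]; rfl
  have hw0 : ∀ t x, 0 ≤ w t x := fun t x => by simp only [hw]; positivity
  have hwi : ∀ t, Integrable (w t) := fun t => by rw [← hwe]; exact hint t
  have hwc : Cn w := by
    have h1 := S.sv.dx.cont
    have h2 := S.sa.dx.cont
    have h3 := S.sb.dx.cont
    unfold Cn; simp only [hw]; fun_prop
  have hwC : ∀ t, ∫ x, w t x ≤ C := fun t => by rw [← hwe]; exact hle t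
  simp_rw [hwe]
  set g : ℝ → ℝ := fun t => ∫ x in {x : ℝ | |x| ≤ K * t ^ p₁}, w t x with hg
  have g0 : ∀ t, 0 ≤ g t := fun t => integral_nonneg (hw0 t)
  have gC : ∀ t, g t ≤ C := fun t =>
    (setIntegral_le_integral (hwi t) (Filter.Eventually.of_forall (hw0 t))).trans (hwC t)
  have bu : IsBoundedUnder (· ≥ ·) atTop g := isBoundedUnder_of ⟨0, g0⟩
  have cu : IsCoboundedUnder (· ≥ ·) atTop g :=
    (isBoundedUnder_of ⟨C, gC⟩ : IsBoundedUnder (· ≤ ·) atTop g).isCoboundedUnder_ge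
  refine le_antisymm ?_ (le_liminf_of_le cu (Filter.Eventually.of_forall g0))
  refine le_of_forall_pos_le_add fun ε hε => ?_
  rw [zero_add]
  refine liminf_le_of_frequently_le ?_ bu
  by_contra hcon
  rw [not_frequently] at hcon
  -- choice of the exponent
  obtain ⟨q, hq1, hq2, hq3⟩ : ∃ q : ℝ, p₁ < q ∧ 1 / 3 ≤ q ∧ q < 2 / 3 := by
    refine ⟨(max p₁ (1 / 3) + 2 / 3) / 2, ?_, ?_, ?_⟩
    · linarith [le_max_left p₁ (1 / 3)]
    · linarith [le_max_right p₁ (1 / 3)]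
    · have : max p₁ (1 / 3) < 2 / 3 := max_lt hp₁' (by norm_num)
      linarith
  have lim1 : Tendsto (fun T : ℝ => 6 * D * T ^ (q - 2 / 3)) atTop (nhds 0) := by
    have := (tendsto_rpow_neg_atTop (y := 2 / 3 - q) (by linarith)).const_mul (6 * D)
    rw [mul_zero] at this
    refine this.congr fun T => ?_
    rw [neg_sub]
  have lim2 : Tendsto (fun T : ℝ => K * 2 ^ p₁ * T ^ (p₁ - q)) atTop (nhds 0) := by
    have := (tendsto_rpow_neg_atTop (y := q - p₁) (by linarith)).const_mul (K * 2 ^ p₁)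
    rw [mul_zero] at this
    refine this.congr fun T => ?_
    rw [neg_sub]
  obtain ⟨T0, hT0⟩ := eventually_atTop.1 hcon
  obtain ⟨T, h1, h2, h3, h4⟩ := ((lim1.eventually (gt_mem_nhds hε)).and
    ((lim2.eventually (gt_mem_nhds one_pos)).and
      ((eventually_ge_atTop T0).and (eventually_ge_atTop (1:ℝ))))).exists
  have Tp : 0 < T := by linarith
  set l : ℝ := T ^ q with hl
  set m : ℝ := T ^ (2 / 3 : ℝ) with hm
  have l1 : 1 ≤ l := Real.one_le_rpow h4 (by linarith)
  have lm : l ≤ m := Real.rpow_le_rpow_of_exponent_le h4 hq3.le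
  have lp : 0 < l := by linarith
  obtain ⟨P, Pc, P0, Pl, hP⟩ := hD l m T (2 * T) l1 lm (by linarith)
  have hPw : Cn (fun t x => P x * w t x) := by
    have h1 : Continuous fun p : ℝ × ℝ => w p.1 p.2 := hwc
    unfold Cn; fun_prop
  have low : ∀ t ∈ Set.Icc T (2 * T),
      ε / (2 * l) ≤ ∫ x in (-(3 * m))..(3 * m), P x * w t x := by
    intro t ht
    have hKl : K * t ^ p₁ ≤ l := by
      have e1 : t ^ p₁ ≤ (2 * T) ^ p₁ := Real.rpow_le_rpow (by linarith [ht.1]) ht.2 hp₁.le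
      rw [Real.mul_rpow (by norm_num) Tp.le] at e1
      have e2 : T ^ p₁ = T ^ (p₁ - q) * l := by
        rw [hl, ← Real.rpow_add Tp]; congr 1; ring
      calc K * t ^ p₁ ≤ K * (2 ^ p₁ * T ^ p₁) := by gcongr
        _ = (K * 2 ^ p₁ * T ^ (p₁ - q)) * l := by rw [e2]; ring
        _ ≤ 1 * l := by gcongr
        _ = l := one_mul l
    have hgt : ε ≤ g t := (not_le.1 (hT0 t (by linarith [ht.1]))).le
    have hPi : IntegrableOn (fun x => P x * w t x) (Set.Ioc (-(3 * m)) (3 * m)) :=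
      (hPw.sec t).integrableOn_Ioc
    have hsub : {x : ℝ | |x| ≤ K * t ^ p₁} ⊆ Set.Ioc (-(3 * m)) (3 * m) := by
      intro x hx
      have := abs_le.1 (le_trans (show |x| ≤ K * t ^ p₁ from hx) hKl)
      exact ⟨by linarith [this.1], by linarith [this.2]⟩
    have hms : MeasurableSet {x : ℝ | |x| ≤ K * t ^ p₁} :=
      (isClosed_le continuous_abs continuous_const).measurableSet
    rw [intervalIntegral.integral_of_le (by linarith)]
    calc ε / (2 * l) ≤ 1 / (2 * l) * g t := by
          rw [div_mul_eq_mul_div, one_mul]; gcongr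
      _ = ∫ x in {x : ℝ | |x| ≤ K * t ^ p₁}, 1 / (2 * l) * w t x := by
          rw [integral_const_mul]
      _ ≤ ∫ x in {x : ℝ | |x| ≤ K * t ^ p₁}, P x * w t x := by
          refine setIntegral_mono_on ((hwi t).integrableOn.const_mul _) (hPi.mono_set hsub) hms ?_
          intro x hx
          exact mul_le_mul_of_nonneg_right
            (Pl x (le_trans (show |x| ≤ K * t ^ p₁ from hx) hKl)) (hw0 t x)
      _ ≤ ∫ x in Set.Ioc (-(3 * m)) (3 * m), P x * w t x :=
          setIntegral_mono_set hPi
            (Filter.Eventually.of_forall fun x => mul_nonneg (P0 x) (hw0 t x))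
            (Filter.Eventually.of_forall hsub)
  have low2 : T * (ε / (2 * l)) ≤ I2 T (2 * T) (3 * m) (fun t x => P x * w t x) := by
    have := intervalIntegral.integral_mono_on (μ := volume) (show T ≤ 2 * T by linarith)
      (intervalIntegrable_const) ((hPw.inner (3 * m)).intervalIntegrable T (2 * T)) low
    rw [intervalIntegral.integral_const, smul_eq_mul] at this
    unfold I2
    linarith
  have fin := low2.trans hP
  have sm : √m = T ^ (1 / 3 : ℝ) := by
    rw [hm, Real.sqrt_eq_rpow, ← Real.rpow_mul Tp.le]; norm_num
  have l3 : l ^ 3 = T ^ (3 * q) := by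
    rw [hl, ← Real.rpow_natCast, ← Real.rpow_mul Tp.le]; congr 1; push_cast; ring
  set E : ℝ := T ^ (q - 2 / 3) with hE
  have k1 : l * √m = T * E := by
    rw [sm, hl, hE, ← Real.rpow_add Tp, ← Real.rpow_one_add' Tp.le (by linarith)]; congr 1; ring
  have k2 : l * (√m / l ^ 3) ≤ E := by
    rw [sm, l3, hl, ← Real.rpow_sub Tp, ← Real.rpow_add Tp]
    exact Real.rpow_le_rpow_of_exponent_le h4 (by linarith)
  have k3 : l * (1 / m) = E := by
    rw [hl, hm, hE, Real.rpow_sub Tp, mul_one_div]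
  have fin2 : T * ε ≤ T * (6 * D * E) := by
    calc T * ε = 2 * l * (T * (ε / (2 * l))) := by field_simp
      _ ≤ 2 * l * (D * (√m + (2 * T - T) * (√m / l ^ 3 + 1 / m))) := by gcongr
      _ = 2 * D * (l * √m + T * (l * (√m / l ^ 3) + l * (1 / m))) := by ring
      _ ≤ 2 * D * (T * E + T * (E + E)) := by
          rw [k1, k3]; gcongr
      _ = T * (6 * D * E) := by ring
  have := le_of_mul_le_mul_left fin2 Tp
  linarith
end

section
/- Let α < 0, γ < 0 and β ∈ ℝ, and let (u,v) be a regular solution of the Schrödinger–Korteweg–de Vries system with these parameters. Let p₁, q₁, p₂ satisfy q₁ > 0, p₂ > 1 and 0 < p₁ ≤ 2/(p₂+2), and define λ₁(t) = t^{p₁}/(log t)^{q₁}, λ₂(t) = λ₁(t)^{p₂}, η(t) = t^{1−p₁}·(log t)^{1+q₁}. Then for all a > 0 and b > 0, the iterated integral ∫_{10}^{∞} (1/(η(t)·λ₁(t))) · ( ∫_ℝ ( v(t,x)² + |u(t,x)|² ) · sech(x/(a·λ₁(t))) · sech(x/(b·λ₂(t))) dx ) dt is finite. -/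
open MeasureTheory Filter

namespace SKdV

noncomputable def r (y : ℝ) : ℝ := (1 + y ^ 2)⁻¹
noncomputable def r1 (y : ℝ) : ℝ := -2 * y * r y ^ 2
noncomputable def r2 (y : ℝ) : ℝ := -2 * r y ^ 2 + 8 * y ^ 2 * r y ^ 3
noncomputable def r3 (y : ℝ) : ℝ := 24 * y * r y ^ 3 - 48 * y ^ 3 * r y ^ 4
noncomputable def q0 (y : ℝ) : ℝ := (1 - y ^ 2) ^ 4
noncomputable def q1 (y : ℝ) : ℝ := -8 * y * (1 - y ^ 2) ^ 3
noncomputable def q2 (y : ℝ) : ℝ := -8 * (1 - y ^ 2) ^ 3 + 48 * y ^ 2 * (1 - y ^ 2) ^ 2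
noncomputable def q3 (y : ℝ) : ℝ := 144 * y * (1 - y ^ 2) ^ 2 - 192 * y ^ 3 * (1 - y ^ 2)

lemma r_pos (y : ℝ) : 0 < r y := by unfold r; positivity
lemma r_mul (y : ℝ) : r y * (1 + y ^ 2) = 1 := by
  unfold r; exact inv_mul_cancel₀ (by positivity)
lemma r_le_one (y : ℝ) : r y ≤ 1 := by
  have := r_mul y; have := r_pos y; nlinarith [mul_nonneg this.le (sq_nonneg y)]
lemma y2r (y : ℝ) : y ^ 2 * r y ≤ 1 := by
  have := r_mul y; have := r_pos y; nlinarith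
lemma yr (y : ℝ) : |y * r y| ≤ 1 / 2 := by
  have h := r_mul y; have h2 := r_pos y
  rw [abs_le]
  constructor <;> nlinarith [mul_nonneg h2.le (sq_nonneg (y - 1)), mul_nonneg h2.le (sq_nonneg (y + 1))]

lemma r_cont : Continuous r := by
  unfold r
  exact Continuous.inv₀ (by fun_prop) (fun y => by positivity)
lemma r1_cont : Continuous r1 := by
  unfold r1; have := r_cont; fun_prop
lemma r2_cont : Continuous r2 := by
  unfold r2; have := r_cont; fun_prop
lemma r3_cont : Continuous r3 := by
  unfold r3; have := r_cont; fun_prop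
lemma q0_cont : Continuous q0 := by unfold q0; fun_prop
lemma q1_cont : Continuous q1 := by unfold q1; fun_prop
lemma q2_cont : Continuous q2 := by unfold q2; fun_prop
lemma q3_cont : Continuous q3 := by unfold q3; fun_prop

lemma r_der (y : ℝ) : HasDerivAt r (r1 y) y := by
  have h : HasDerivAt (fun y : ℝ => 1 + y ^ 2) (2 * y) y := by
    simpa using ((hasDerivAt_pow 2 y).const_add 1)
  have := h.inv (by positivity)
  refine this.congr_deriv ?_
  unfold r1 r; field_simp
lemma arctan_der (y : ℝ) : HasDerivAt Real.arctan (r y) y := by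
  have := Real.hasDerivAt_arctan y
  unfold r; simpa using this
lemma r1_der (y : ℝ) : HasDerivAt r1 (r2 y) y := by
  have := ((hasDerivAt_id y).const_mul (-2)).mul ((r_der y).pow 2)
  refine this.congr_deriv ?_
  simp [r2, r1]; ring
lemma r2_der (y : ℝ) : HasDerivAt r2 (r3 y) y := by
  have := (((r_der y).pow 2).const_mul (-2)).add
    ((((hasDerivAt_id y).pow 2).const_mul 8).mul ((r_der y).pow 3))
  refine this.congr_deriv ?_
  simp [r3, r1]; ring
lemma s_der (y : ℝ) : HasDerivAt (fun y : ℝ => 1 - y ^ 2) (-(2 * y)) y := by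
  simpa using ((hasDerivAt_pow 2 y).const_sub 1)
lemma q0_der (y : ℝ) : HasDerivAt q0 (q1 y) y := by
  refine ((s_der y).pow 4).congr_deriv ?_
  simp [q1]; ring
lemma q1_der (y : ℝ) : HasDerivAt q1 (q2 y) y := by
  refine (((hasDerivAt_id y).const_mul (-8)).mul ((s_der y).pow 3)).congr_deriv ?_
  simp [q2]; ring
lemma q2_der (y : ℝ) : HasDerivAt q2 (q3 y) y := by
  refine ((((s_der y).pow 3).const_mul (-8)).add
    ((((hasDerivAt_id y).pow 2).const_mul 48).mul ((s_der y).pow 2))).congr_deriv ?_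
  simp [q3]; ring

lemma atan_bd (y : ℝ) : |Real.arctan y| ≤ 2 := by
  have h1 := Real.arctan_lt_pi_div_two y
  have h2 := Real.neg_pi_div_two_lt_arctan y
  have := Real.pi_lt_four
  rw [abs_le]; constructor <;> linarith
lemma r1_bd (y : ℝ) : |r1 y| ≤ r y := by
  have : r1 y = -2 * (y * r y) * r y := by unfold r1; ring
  rw [this, abs_mul, abs_mul, abs_of_pos (r_pos y)]
  have h1 := yr y; have := r_pos y
  rw [abs_neg, abs_two]; nlinarith
lemma yr1_bd (y : ℝ) : |y * r1 y| ≤ 2 * r y := by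
  have : y * r1 y = -2 * (y ^ 2 * r y) * r y := by unfold r1; ring
  have h := r_pos y
  rw [this, abs_mul, abs_mul, abs_of_pos h, abs_of_nonneg (by positivity : 0 ≤ y ^ 2 * r y)]
  have := y2r y
  norm_num; nlinarith
lemma r2_bd (y : ℝ) : |r2 y| ≤ 10 * r y := by
  have h := r_pos y
  have h1 := r_le_one y
  have h2 := y2r y
  have h3 : 0 ≤ y ^ 2 * r y := by positivity
  have : r2 y = (-2 * r y + 8 * (y ^ 2 * r y) * r y) * r y := by unfold r2; ring
  rw [this, abs_mul, abs_of_pos h]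
  refine mul_le_mul_of_nonneg_right ?_ h.le
  have : y ^ 2 * r y * r y ≤ 1 := by nlinarith
  have : 0 ≤ y ^ 2 * r y * r y := by positivity
  rw [abs_le]; constructor <;> nlinarith
lemma r3_bd (y : ℝ) : |r3 y| ≤ 36 * r y := by
  have h := r_pos y
  have h1 := r_le_one y
  have h2 := y2r y
  have h3 : 0 ≤ y ^ 2 * r y := by positivity
  have : r3 y = ((y * r y) * ((24 - 48 * (y ^ 2 * r y)) * r y)) * r y := by unfold r3; ring
  rw [this, abs_mul, abs_of_pos h, abs_mul]
  refine mul_le_mul_of_nonneg_right ?_ h.le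
  have a1 := yr y
  have a2 : |(24 - 48 * (y ^ 2 * r y)) * r y| ≤ 24 := by
    rw [abs_mul, abs_of_pos h]
    have : |24 - 48 * (y ^ 2 * r y)| ≤ 24 := by rw [abs_le]; constructor <;> linarith
    nlinarith [abs_nonneg (24 - 48 * (y ^ 2 * r y))]
  nlinarith [abs_nonneg (y * r y), abs_nonneg ((24 - 48 * (y ^ 2 * r y)) * r y)]

lemma s_bd {y : ℝ} (hy : |y| ≤ 1) : |1 - y ^ 2| ≤ 1 := by
  have : y ^ 2 ≤ 1 := by rw [← sq_abs]; nlinarith [abs_nonneg y]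
  rw [abs_le]; constructor <;> nlinarith [sq_nonneg y]
lemma q0_nonneg (y : ℝ) : 0 ≤ q0 y := by unfold q0; positivity
lemma q0_bd {y : ℝ} (hy : |y| ≤ 1) : |q0 y| ≤ 1 := by
  unfold q0; rw [abs_pow]; exact pow_le_one₀ (abs_nonneg _) (s_bd hy)
lemma q1_bd {y : ℝ} (hy : |y| ≤ 1) : |q1 y| ≤ 8 := by
  have h := s_bd hy
  unfold q1
  calc |-8 * y * (1 - y ^ 2) ^ 3| = 8 * |y| * |1 - y ^ 2| ^ 3 := by simp [abs_mul, abs_pow]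
    _ ≤ 8 * 1 * 1 ^ 3 := by gcongr
    _ = 8 := by norm_num
lemma q2_bd {y : ℝ} (hy : |y| ≤ 1) : |q2 y| ≤ 56 := by
  have h := s_bd hy
  unfold q2
  calc _ ≤ |-8 * (1 - y ^ 2) ^ 3| + |48 * y ^ 2 * (1 - y ^ 2) ^ 2| := abs_add_le _ _
    _ = 8 * |1 - y ^ 2| ^ 3 + 48 * |y| ^ 2 * |1 - y ^ 2| ^ 2 := by simp [abs_mul, abs_pow]
    _ ≤ 8 * 1 ^ 3 + 48 * 1 ^ 2 * 1 ^ 2 := by gcongr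
    _ = 56 := by norm_num
lemma q3_bd {y : ℝ} (hy : |y| ≤ 1) : |q3 y| ≤ 336 := by
  have h := s_bd hy
  unfold q3
  calc _ ≤ |144 * y * (1 - y ^ 2) ^ 2| + |192 * y ^ 3 * (1 - y ^ 2)| := abs_sub _ _
    _ = 144 * |y| * |1 - y ^ 2| ^ 2 + 192 * |y| ^ 3 * |1 - y ^ 2| := by simp [abs_mul, abs_pow]
    _ ≤ 144 * 1 * 1 ^ 2 + 192 * 1 ^ 3 * 1 := by gcongr
    _ = 336 := by norm_num

noncomputable def P0 (i j k x : ℝ) : ℝ := Real.arctan (x * i) * r (x * j) * q0 (x * k)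
noncomputable def P1 (i j k x : ℝ) : ℝ :=
  i * r (x * i) * r (x * j) * q0 (x * k) + j * Real.arctan (x * i) * r1 (x * j) * q0 (x * k)
    + k * Real.arctan (x * i) * r (x * j) * q1 (x * k)
noncomputable def P2 (i j k x : ℝ) : ℝ :=
  i ^ 2 * r1 (x * i) * r (x * j) * q0 (x * k)
    + j ^ 2 * Real.arctan (x * i) * r2 (x * j) * q0 (x * k)
    + k ^ 2 * Real.arctan (x * i) * r (x * j) * q2 (x * k)
    + 2 * i * j * r (x * i) * r1 (x * j) * q0 (x * k)
    + 2 * i * k * r (x * i) * r (x * j) * q1 (x * k)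
    + 2 * j * k * Real.arctan (x * i) * r1 (x * j) * q1 (x * k)
noncomputable def P3 (i j k x : ℝ) : ℝ :=
  i ^ 3 * r2 (x * i) * r (x * j) * q0 (x * k)
    + 3 * i ^ 2 * j * r1 (x * i) * r1 (x * j) * q0 (x * k)
    + 3 * i * j ^ 2 * r (x * i) * r2 (x * j) * q0 (x * k)
    + j ^ 3 * Real.arctan (x * i) * r3 (x * j) * q0 (x * k)
    + 3 * i ^ 2 * k * r1 (x * i) * r (x * j) * q1 (x * k)
    + 6 * i * j * k * r (x * i) * r1 (x * j) * q1 (x * k)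
    + 3 * i * k ^ 2 * r (x * i) * r (x * j) * q2 (x * k)
    + 3 * j ^ 2 * k * Real.arctan (x * i) * r2 (x * j) * q1 (x * k)
    + 3 * j * k ^ 2 * Real.arctan (x * i) * r1 (x * j) * q2 (x * k)
    + k ^ 3 * Real.arctan (x * i) * r (x * j) * q3 (x * k)
noncomputable def Pt (i j k m n x : ℝ) : ℝ :=
  - m * (x * i * r (x * i)) * r (x * j) * q0 (x * k)
    - n * Real.arctan (x * i) * (x * j * r1 (x * j)) * q0 (x * k)

lemma sc {f : ℝ → ℝ} {f' i x : ℝ} (h : HasDerivAt f f' (x * i)) :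
    HasDerivAt (fun x => f (x * i)) (f' * i) x := by
  have h2 : HasDerivAt (fun x : ℝ => x * i) i x := by simpa using (hasDerivAt_id x).mul_const i
  exact h.comp x h2

lemma P0_der (i j k x : ℝ) : HasDerivAt (P0 i j k) (P1 i j k x) x := by
  have := ((sc (arctan_der (x * i))).mul (sc (r_der (x * j)))).mul (sc (q0_der (x * k)))
  refine this.congr_deriv ?_
  simp only [Pi.mul_apply, P1]; ring

lemma tri {f g h : ℝ → ℝ} {f' g' h' i j k x : ℝ} (c : ℝ) (hf : HasDerivAt f f' (x * i))
    (hg : HasDerivAt g g' (x * j)) (hh : HasDerivAt h h' (x * k)) :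
    HasDerivAt (fun x => c * f (x * i) * g (x * j) * h (x * k))
      (c * (i * f' * g (x * j) * h (x * k) + j * f (x * i) * g' * h (x * k)
        + k * f (x * i) * g (x * j) * h')) x := by
  refine ((((sc hf).const_mul c).mul (sc hg)).mul (sc hh)).congr_deriv ?_
  simp only [Pi.mul_apply]; ring

lemma P1_der (i j k x : ℝ) : HasDerivAt (P1 i j k) (P2 i j k x) x := by
  have := ((tri i (r_der (x * i)) (r_der (x * j)) (q0_der (x * k))).add
    (tri j (arctan_der (x * i)) (r1_der (x * j)) (q0_der (x * k)))).add
    (tri k (arctan_der (x * i)) (r_der (x * j)) (q1_der (x * k)))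
  refine this.congr_deriv ?_
  simp only [P2]; ring

lemma P2_der (i j k x : ℝ) : HasDerivAt (P2 i j k) (P3 i j k x) x := by
  have := (((((tri (i ^ 2) (r1_der (x * i)) (r_der (x * j)) (q0_der (x * k))).add
    (tri (j ^ 2) (arctan_der (x * i)) (r2_der (x * j)) (q0_der (x * k)))).add
    (tri (k ^ 2) (arctan_der (x * i)) (r_der (x * j)) (q2_der (x * k)))).add
    (tri (2 * i * j) (r_der (x * i)) (r1_der (x * j)) (q0_der (x * k)))).add
    (tri (2 * i * k) (r_der (x * i)) (r_der (x * j)) (q1_der (x * k)))).add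
    (tri (2 * j * k) (arctan_der (x * i)) (r1_der (x * j)) (q1_der (x * k)))
  refine this.congr_deriv ?_
  simp only [P3]; ring

lemma P3_cont (i j k : ℝ) : Continuous (P3 i j k) := by
  have := r_cont; have := r1_cont; have := r2_cont; have := r3_cont
  have := q0_cont; have := q1_cont; have := q2_cont; have := q3_cont
  have := Real.continuous_arctan
  unfold P3; fun_prop

lemma t3 {c f g h F G H : ℝ} (hc : 0 ≤ c) (hf : |f| ≤ F) (hg : |g| ≤ G) (hh : |h| ≤ H) :
    |c * f * g * h| ≤ c * F * G * H := by
  rw [abs_mul, abs_mul, abs_mul, abs_of_nonneg hc]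
  have := (abs_nonneg f).trans hf
  have := (abs_nonneg g).trans hg
  gcongr

lemma r_abs (y : ℝ) : |r y| ≤ r y := by rw [abs_of_pos (r_pos y)]
lemma r_abs1 (y : ℝ) : |r y| ≤ 1 := by rw [abs_of_pos (r_pos y)]; exact r_le_one y

lemma P0_bd {i j k x : ℝ} (hx : |x * k| ≤ 1) : |P0 i j k x| ≤ 2 * r (x * j) := by
  have := t3 zero_le_one (atan_bd (x * i)) (r_abs (x * j)) (q0_bd hx)
  unfold P0; simpa using this

lemma P1_bd {i j k x : ℝ} (hj : 0 ≤ j) (hk : 0 ≤ k) (hx : |x * k| ≤ 1) :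
    |P1 i j k x - i * r (x * i) * r (x * j) * q0 (x * k)| ≤ 2 * j + 16 * k := by
  have h1 := t3 hj (atan_bd (x * i)) ((r1_bd (x * j)).trans (r_le_one _)) (q0_bd hx)
  have h2 := t3 hk (atan_bd (x * i)) (r_abs1 (x * j)) (q1_bd hx)
  have : P1 i j k x - i * r (x * i) * r (x * j) * q0 (x * k) =
    j * Real.arctan (x * i) * r1 (x * j) * q0 (x * k)
    + k * Real.arctan (x * i) * r (x * j) * q1 (x * k) := by unfold P1; ring
  rw [this]
  refine (abs_add_le _ _).trans ?_
  linarith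

lemma Pt_bd {i j k m n M x : ℝ} (hx : |x * k| ≤ 1) (hm : |m| ≤ M) (hn : |n| ≤ M) :
    |Pt i j k m n x| ≤ 5 * M * r (x * j) := by
  have hM := (abs_nonneg m).trans hm
  have h1 : |m * (x * i * r (x * i)) * r (x * j) * q0 (x * k)| ≤ M * (1 / 2) * r (x * j) * 1 := by
    have := t3 zero_le_one hm (yr (x * i)) (r_abs (x * j))
    rw [abs_mul]
    rw [one_mul, one_mul] at this
    exact mul_le_mul this (q0_bd hx) (abs_nonneg _) (by have := r_pos (x * j); positivity)
  have h2 : |n * Real.arctan (x * i) * (x * j * r1 (x * j)) * q0 (x * k)|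
      ≤ M * 2 * (2 * r (x * j)) * 1 := by
    have := t3 zero_le_one hn (atan_bd (x * i)) (yr1_bd (x * j))
    rw [abs_mul]
    rw [one_mul, one_mul] at this
    exact mul_le_mul this (q0_bd hx) (abs_nonneg _) (by have := r_pos (x * j); positivity)
  have : Pt i j k m n x = -(m * (x * i * r (x * i)) * r (x * j) * q0 (x * k)) -
    n * Real.arctan (x * i) * (x * j * r1 (x * j)) * q0 (x * k) := by unfold Pt; ring
  rw [this]
  refine (abs_sub _ _).trans ?_
  rw [abs_neg]
  nlinarith [mul_nonneg hM (r_pos (x * j)).le]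

lemma abs10 {a b c d e f g h i j A B C D E F G H I J : ℝ} (ha : |a| ≤ A) (hb : |b| ≤ B)
    (hc : |c| ≤ C) (hd : |d| ≤ D) (he : |e| ≤ E) (hf : |f| ≤ F) (hg : |g| ≤ G) (hh : |h| ≤ H)
    (hi : |i| ≤ I) (hj : |j| ≤ J) :
    |a + b + c + d + e + f + g + h + i + j| ≤ A + B + C + D + E + F + G + H + I + J := by
  rw [abs_le] at *
  constructor <;> linarith

set_option maxHeartbeats 1000000 in
lemma P3_bd {i j k K x : ℝ} (hi : 0 ≤ i) (hj : 0 ≤ j) (hk : 0 ≤ k) (hK : 1 ≤ K) (hiK : i ≤ K)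
    (hjK : j ≤ K * i) (hk1 : k ≤ 1) (hx : |x * k| ≤ 1) :
    |P3 i j k x| ≤ 43 * K ^ 2 * i ^ 3 * r (x * i) + (72 * j ^ 3 + 1728 * K ^ 4 * k) * r (x * j) := by
  set A := r (x * i)
  set B := r (x * j)
  have hA : 0 ≤ A := (r_pos _).le
  have hB : 0 ≤ B := (r_pos _).le
  have hA1 : A ≤ 1 := r_le_one _
  have hB1 : B ≤ 1 := r_le_one _
  have hjK2 : j ≤ K ^ 2 := by nlinarith
  have b0 := q0_bd hx
  have b1 := q1_bd hx
  have b2 := q2_bd hx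
  have b3 := q3_bd hx
  have e1 := t3 (by positivity : 0 ≤ i ^ 3) (r2_bd (x * i)) (r_abs1 (x * j)) b0
  have e2 := t3 (by positivity : 0 ≤ 3 * i ^ 2 * j) (r1_bd (x * i))
    ((r1_bd (x * j)).trans (r_le_one _)) b0
  have e3 := t3 (by positivity : 0 ≤ 3 * i * j ^ 2) (r_abs (x * i))
    ((r2_bd (x * j)).trans (by linarith : 10 * B ≤ 10)) b0
  have e4 := t3 (by positivity : 0 ≤ j ^ 3) (atan_bd (x * i)) (r3_bd (x * j)) b0
  have e5 := t3 (by positivity : 0 ≤ 3 * i ^ 2 * k) ((r1_bd (x * i)).trans (r_le_one _))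
    (r_abs (x * j)) b1
  have e6 := t3 (by positivity : 0 ≤ 6 * i * j * k) (r_abs1 (x * i)) (r1_bd (x * j)) b1
  have e7 := t3 (by positivity : 0 ≤ 3 * i * k ^ 2) (r_abs1 (x * i)) (r_abs (x * j)) b2
  have e8 := t3 (by positivity : 0 ≤ 3 * j ^ 2 * k) (atan_bd (x * i)) (r2_bd (x * j)) b1
  have e9 := t3 (by positivity : 0 ≤ 3 * j * k ^ 2) (atan_bd (x * i)) (r1_bd (x * j)) b2
  have e10 := t3 (by positivity : 0 ≤ k ^ 3) (atan_bd (x * i)) (r_abs (x * j)) b3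
  have f1 : i ^ 3 * (10 * A) * 1 * 1 ≤ 10 * K ^ 2 * i ^ 3 * A := by
    have : 1 ≤ K ^ 2 := one_le_pow₀ hK
    nlinarith [mul_nonneg (pow_nonneg hi 3) hA]
  have f2 : 3 * i ^ 2 * j * A * 1 * 1 ≤ 3 * K ^ 2 * i ^ 3 * A := by
    have : 3 * i ^ 2 * j * A ≤ 3 * i ^ 2 * (K ^ 2 * i) * A := by
      have : j ≤ K ^ 2 * i := hjK.trans (by nlinarith)
      gcongr
    linarith
  have f3 : 3 * i * j ^ 2 * A * 10 * 1 ≤ 30 * K ^ 2 * i ^ 3 * A := by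
    have : 3 * i * j ^ 2 * A * 10 ≤ 3 * i * (K * i) ^ 2 * A * 10 := by gcongr
    linarith
  have f5 : 3 * i ^ 2 * k * 1 * B * 8 ≤ 24 * K ^ 4 * k * B := by
    have : 3 * i ^ 2 * k * 1 * B * 8 ≤ 3 * (K ^ 2) ^ 2 * k * 1 * B * 8 := by
      have : i ≤ K ^ 2 := by nlinarith
      gcongr
    linarith
  have f6 : 6 * i * j * k * 1 * B * 8 ≤ 48 * K ^ 4 * k * B := by
    have : 6 * i * j * k * 1 * B * 8 ≤ 6 * K ^ 2 * K ^ 2 * k * 1 * B * 8 := by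
      have : i ≤ K ^ 2 := by nlinarith
      gcongr
    linarith
  have hk2 : k ^ 2 ≤ k := pow_le_of_le_one hk hk1 (by norm_num)
  have hk3 : k ^ 3 ≤ k := pow_le_of_le_one hk hk1 (by norm_num)
  have hKK : K ≤ K ^ 4 := by
    have := pow_le_pow_right₀ hK (by norm_num : 1 ≤ 4); simpa using this
  have hKK2 : K ^ 2 ≤ K ^ 4 := pow_le_pow_right₀ hK (by norm_num : 2 ≤ 4)
  have f7 : 3 * i * k ^ 2 * 1 * B * 56 ≤ 168 * K ^ 4 * k * B := by
    have : 3 * i * k ^ 2 * 1 * B * 56 ≤ 3 * K ^ 4 * k * 1 * B * 56 := by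
      have : i ≤ K ^ 4 := hiK.trans hKK
      gcongr
    linarith
  have f8 : 3 * j ^ 2 * k * 2 * (10 * B) * 8 ≤ 480 * K ^ 4 * k * B := by
    have : 3 * j ^ 2 * k * 2 * (10 * B) * 8 ≤ 3 * (K ^ 2) ^ 2 * k * 2 * (10 * B) * 8 := by gcongr
    linarith
  have f9 : 3 * j * k ^ 2 * 2 * B * 56 ≤ 336 * K ^ 4 * k * B := by
    have : 3 * j * k ^ 2 * 2 * B * 56 ≤ 3 * K ^ 4 * k * 2 * B * 56 := by
      have : j ≤ K ^ 4 := hjK2.trans hKK2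
      gcongr
    linarith
  have f10 : k ^ 3 * 2 * B * 336 ≤ 672 * K ^ 4 * k * B := by
    have : k ^ 3 * 2 * B * 336 ≤ (K ^ 4 * k) * 2 * B * 336 := by
      have : k ^ 3 ≤ K ^ 4 * k := hk3.trans (by have := one_le_pow₀ (n := 4) hK; nlinarith)
      gcongr
    linarith
  unfold P3
  refine (abs10 e1 e2 e3 e4 e5 e6 e7 e8 e9 e10).trans ?_
  linarith

end SKdV
namespace SKdV

lemma int_r {j R : ℝ} (hj : 0 < j) : ∫ x in (-R)..R, r (x * j) ≤ 4 / j := by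
  have h : ∫ x in (-R)..R, r (x * j) = j⁻¹ * (Real.arctan (R * j) - Real.arctan (-R * j)) := by
    rw [intervalIntegral.integral_comp_mul_right r hj.ne']
    unfold r
    rw [smul_eq_mul, integral_inv_one_add_sq]
  rw [h]
  have h1 := abs_le.1 (atan_bd (R * j))
  have h2 := abs_le.1 (atan_bd (-R * j))
  rw [div_eq_inv_mul]
  have : 0 < j⁻¹ := by positivity
  gcongr; linarith

lemma cs {v : ℝ → ℝ} (hv : Continuous v) {M j R : ℝ} (hj : 0 < j) (hR : 0 ≤ R)
    (hM : ∫ x in (-R)..R, v x ^ 2 ≤ M) :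
    ∫ x in (-R)..R, |v x| * r (x * j) ≤ (M + 4) / √j := by
  have hc := r_cont
  have hs : 0 < √j := Real.sqrt_pos.2 hj
  have hM0 : 0 ≤ ∫ x in (-R)..R, v x ^ 2 :=
    intervalIntegral.integral_nonneg (by linarith) (fun x _ => sq_nonneg _)
  have h1 : ∫ x in (-R)..R, |v x| * r (x * j) ≤
      ∫ x in (-R)..R, ((√j)⁻¹ * v x ^ 2 + √j * r (x * j)) := by
    apply intervalIntegral.integral_mono_on (by linarith)
    · exact (Continuous.intervalIntegrable (by fun_prop) _ _)
    · exact (Continuous.intervalIntegrable (by fun_prop) _ _)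
    intro x _
    have hr := r_pos (x * j)
    have hr1 := r_le_one (x * j)
    have e : (√j)⁻¹ * √j = 1 := inv_mul_cancel₀ hs.ne'
    have hi : 0 < (√j)⁻¹ := by positivity
    have : 0 ≤ (√j)⁻¹ * (|v x| - √j * r (x * j) / 2) ^ 2 := by positivity
    have e2 : (√j)⁻¹ * (|v x| - √j * r (x * j) / 2) ^ 2 =
      (√j)⁻¹ * v x ^ 2 - ((√j)⁻¹ * √j) * |v x| * r (x * j)
       + ((√j)⁻¹ * √j) * √j * r (x * j) ^ 2 / 4 := by
      rw [← sq_abs (v x)]; ring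
    rw [e2, e] at this
    nlinarith [mul_nonneg hs.le hr.le, mul_nonneg (mul_nonneg hs.le hr.le) (sub_nonneg.2 hr1)]
  refine h1.trans ?_
  rw [intervalIntegral.integral_add (Continuous.intervalIntegrable (by fun_prop) _ _)
    (Continuous.intervalIntegrable (by fun_prop) _ _), intervalIntegral.integral_const_mul,
    intervalIntegral.integral_const_mul]
  have h2 := int_r (R := R) hj
  have h3 : √j * (4 / j) = 4 / √j := by
    rw [← Real.mul_self_sqrt hj.le]
    simp only [Real.sqrt_mul_self hs.le]
    field_simp
  have h4 : √j * ∫ x in (-R)..R, r (x * j) ≤ 4 / √j := by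
    rw [← h3]; gcongr
  have h5 : (√j)⁻¹ * ∫ x in (-R)..R, v x ^ 2 ≤ M / √j := by
    rw [div_eq_inv_mul]; gcongr
  rw [add_div]; linarith

lemma P0_cont (i j k : ℝ) : Continuous (P0 i j k) :=
  continuous_iff_continuousAt.2 fun x => (P0_der i j k x).continuousAt
lemma P1_cont (i j k : ℝ) : Continuous (P1 i j k) :=
  continuous_iff_continuousAt.2 fun x => (P1_der i j k x).continuousAt
lemma Pt_cont (i j k m n : ℝ) : Continuous (Pt i j k m n) := by
  have := r_cont; have := r1_cont; have := q0_cont; have := Real.continuous_arctan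
  unfold Pt; fun_prop

lemma spatial {v w : ℝ → ℝ} (hv : Continuous v) (hw : Continuous w) (hw0 : ∀ x, 0 ≤ w x)
    {γ M i j k K m n κ S R : ℝ} (hγ : γ < 0) (hRk : R * k = 1) (hR : 0 < R)
    (hMv : ∫ x in (-R)..R, v x ^ 2 ≤ M) (hMw : ∫ x in (-R)..R, w x ≤ M)
    (hi : 0 < i) (hj : 0 < j) (hK : 1 ≤ K) (hiK : i ≤ K)
    (hjK : j ≤ K * i) (hk1 : k ≤ 1) (hm : |m| ≤ S) (hn : |n| ≤ S) (hκ : |κ| ≤ S) :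
    i * (∫ x in (-R)..R, (1 / 2 * v x ^ 2 - γ * w x) * (r (x * i) * r (x * j) * q0 (x * k)))
     - ((7 * S + 72 * j ^ 3 + 1728 * K ^ 4 * k) * ((M + 4) / √j)
        + 43 * K ^ 2 * i ^ 3 * ((M + 4) / √i) + (2 * j + 16 * k) * ((1 - γ) * M))
     ≤ ∫ x in (-R)..R, (v x * (Pt i j k m n x + κ * P0 i j k x) + (v x * P3 i j k x
        + (1 / 2 * v x ^ 2 - γ * w x) * P1 i j k x)) := by
  have hk : 0 < k := by
    by_contra h
    nlinarith
  have hS := (abs_nonneg m).trans hm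
  have c1 := r_cont; have c2 := q0_cont
  have c3 := P0_cont i j k; have c4 := P1_cont i j k; have c5 := P3_cont i j k
  have c6 := Pt_cont i j k m n
  have a1 := cs hv hi hR.le hMv
  have a2 := cs hv hj hR.le hMv
  set c := 7 * S + 72 * j ^ 3 + 1728 * K ^ 4 * k with hc
  have hc0 : 0 ≤ c := by positivity
  set d := 43 * K ^ 2 * i ^ 3 with hd
  have hd0 : 0 ≤ d := by positivity
  have a3 : ∫ x in (-R)..R, (1 / 2 * v x ^ 2 - γ * w x) ≤ (1 - γ) * M := by
    rw [intervalIntegral.integral_sub (Continuous.intervalIntegrable (by fun_prop) _ _)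
      (Continuous.intervalIntegrable (by fun_prop) _ _), intervalIntegral.integral_const_mul,
      intervalIntegral.integral_const_mul]
    have hM0 : 0 ≤ ∫ x in (-R)..R, v x ^ 2 :=
      intervalIntegral.integral_nonneg (by linarith) (fun x _ => sq_nonneg _)
    nlinarith
  have key : ∫ x in (-R)..R, (i * ((1 / 2 * v x ^ 2 - γ * w x) * (r (x * i) * r (x * j) * q0 (x * k)))
      - (c * (|v x| * r (x * j)) + d * (|v x| * r (x * i))
        + (2 * j + 16 * k) * (1 / 2 * v x ^ 2 - γ * w x))) ≤
      ∫ x in (-R)..R, (v x * (Pt i j k m n x + κ * P0 i j k x) + (v x * P3 i j k x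
        + (1 / 2 * v x ^ 2 - γ * w x) * P1 i j k x)) := by
    apply intervalIntegral.integral_mono_on (by linarith)
    · exact (Continuous.intervalIntegrable (by fun_prop) _ _)
    · exact (Continuous.intervalIntegrable (by fun_prop) _ _)
    intro x hx
    have hxk : |x * k| ≤ 1 := by
      rw [abs_mul, abs_of_pos hk, ← hRk]
      have : |x| ≤ R := abs_le.2 hx
      gcongr
    have b1 := P3_bd hi.le hj.le hk.le hK hiK hjK hk1 hxk
    have b2 := P1_bd (i := i) hj.le hk.le hxk
    have b3 := Pt_bd (i := i) (j := j) hxk hm hn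
    have b4 := P0_bd (i := i) (j := j) hxk
    have e0 : 0 ≤ 1 / 2 * v x ^ 2 - γ * w x := by
      have := hw0 x; nlinarith [sq_nonneg (v x)]
    have e1 : |Pt i j k m n x + κ * P0 i j k x + P3 i j k x| ≤ c * r (x * j) + d * r (x * i) := by
      have f1 : |κ * P0 i j k x| ≤ S * (2 * r (x * j)) := by
        rw [abs_mul]; gcongr
      have := abs_add_le (Pt i j k m n x + κ * P0 i j k x) (P3 i j k x)
      have := abs_add_le (Pt i j k m n x) (κ * P0 i j k x)
      rw [hc, hd]
      linarith
    have e2 : -(|v x| * (c * r (x * j) + d * r (x * i))) ≤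
        v x * (Pt i j k m n x + κ * P0 i j k x + P3 i j k x) := by
      have : |v x * (Pt i j k m n x + κ * P0 i j k x + P3 i j k x)| ≤
         (|v x| * (c * r (x * j) + d * r (x * i))) := by
        rw [abs_mul]; gcongr
      exact (abs_le.1 this).1
    have e3 := mul_le_mul_of_nonneg_left (abs_le.1 b2).1 e0
    linarith
  refine le_trans ?_ key
  rw [intervalIntegral.integral_sub (Continuous.intervalIntegrable (by fun_prop) _ _)
      (Continuous.intervalIntegrable (by fun_prop) _ _),
    intervalIntegral.integral_add (Continuous.intervalIntegrable (by fun_prop) _ _)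
      (Continuous.intervalIntegrable (by fun_prop) _ _),
    intervalIntegral.integral_add (Continuous.intervalIntegrable (by fun_prop) _ _)
      (Continuous.intervalIntegrable (by fun_prop) _ _)]
  simp only [intervalIntegral.integral_const_mul]
  have g1 := mul_le_mul_of_nonneg_left a2 hc0
  have g2 := mul_le_mul_of_nonneg_left a1 hd0
  have g3 := mul_le_mul_of_nonneg_left a3 (by positivity : 0 ≤ 2 * j + 16 * k)
  linarith

lemma weak {v vt w : ℝ → ℝ} {γ i j k R : ℝ} (hv : ContDiff ℝ (⊤ : ℕ∞) v)
    (hw : ContDiff ℝ (⊤ : ℕ∞) w) (hvt : Continuous vt) (hRk : R * k = 1)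
    (heq : ∀ x, vt x + iteratedDeriv 3 v x + v x * deriv v x = γ * deriv w x) :
    ∫ x in (-R)..R, vt x * P0 i j k x = ∫ x in (-R)..R, (v x * P3 i j k x
        + (1 / 2 * v x ^ 2 - γ * w x) * P1 i j k x) := by
  have d0 : ∀ x, HasDerivAt v (deriv v x) x := fun x =>
    (hv.differentiable (by simp) x).hasDerivAt
  have dw : ∀ x, HasDerivAt w (deriv w x) x := fun x =>
    (hw.differentiable (by simp) x).hasDerivAt
  have dn : ∀ n x, HasDerivAt (iteratedDeriv n v) (iteratedDeriv (n + 1) v x) x := fun n x => by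
    rw [iteratedDeriv_succ]
    exact ((hv.differentiable_iteratedDeriv n (by exact_mod_cast WithTop.coe_lt_top n)) x).hasDerivAt
  have hvc := hv.continuous
  have hwc := hw.continuous
  have c3 := P0_cont i j k; have c4 := P1_cont i j k; have c5 := P3_cont i j k
  have hder : ∀ x, HasDerivAt (fun x => iteratedDeriv 2 v x * P0 i j k x
      - iteratedDeriv 1 v x * P1 i j k x + v x * P2 i j k x
      + (1 / 2 * v x ^ 2 - γ * w x) * P0 i j k x)
      ((v x * P3 i j k x + (1 / 2 * v x ^ 2 - γ * w x) * P1 i j k x) - vt x * P0 i j k x) x := by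
    intro x
    have := ((((dn 2 x).mul (P0_der i j k x)).sub ((dn 1 x).mul (P1_der i j k x))).add
      ((d0 x).mul (P2_der i j k x))).add
      (((((d0 x).pow 2).const_mul (1 / 2)).sub ((dw x).const_mul γ)).mul (P0_der i j k x))
    refine this.congr_deriv ?_
    have h := heq x
    have h2 : vt x = γ * deriv w x - iteratedDeriv 3 v x - v x * deriv v x := by linarith
    rw [h2]
    simp [iteratedDeriv_one]
    ring
  have hz : ∀ y, y ^ 2 = 1 → q0 y = 0 ∧ q1 y = 0 ∧ q2 y = 0 := by
    intro y hy
    simp [q0, q1, q2, hy]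
  have hz1 := hz (R * k) (by rw [hRk]; norm_num)
  have hz2 := hz (-R * k) (by rw [neg_mul, hRk]; norm_num)
  have := intervalIntegral.integral_eq_sub_of_hasDerivAt (a := -R) (b := R)
    (fun x _ => hder x) (Continuous.intervalIntegrable (by fun_prop) _ _)
  rw [intervalIntegral.integral_sub (Continuous.intervalIntegrable (by fun_prop) _ _)
      (Continuous.intervalIntegrable (by fun_prop) _ _)] at this
  simp only [P0, P1, P2, hz1.1, hz1.2.1, hz1.2.2, hz2.1, hz2.2.1, hz2.2.2] at this
  simp only [P0, P1]
  linarith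

lemma vt_cont {v : ℝ → ℝ → ℝ} (hv : ContDiff ℝ (⊤ : ℕ∞) (fun p : ℝ × ℝ => v p.1 p.2)) :
    Continuous (fun p : ℝ × ℝ => deriv (fun s => v s p.2) p.1) ∧
    ∀ t x, HasDerivAt (fun s => v s x) (deriv (fun s => v s x) t) t := by
  have hd : ∀ t x, HasDerivAt (fun s => v s x)
      (fderiv ℝ (fun p : ℝ × ℝ => v p.1 p.2) (t, x) (1, 0)) t := by
    intro t x
    have h1 := (hv.differentiable (by simp) (t, x)).hasFDerivAt
    have h2 : HasDerivAt (fun s : ℝ => (s, x)) ((1 : ℝ), (0 : ℝ)) t :=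
      (hasDerivAt_id t).prodMk (hasDerivAt_const t x)
    exact h1.comp_hasDerivAt t h2
  constructor
  · have : (fun p : ℝ × ℝ => deriv (fun s => v s p.2) p.1) =
      fun p => fderiv ℝ (fun p : ℝ × ℝ => v p.1 p.2) p (1, 0) := by
      funext p; exact (hd p.1 p.2).deriv
    rw [this]
    exact (hv.continuous_fderiv (by simp)).clm_apply continuous_const
  · intro t x; rw [(hd t x).deriv]; exact hd t x

lemma time_der {v : ℝ → ℝ → ℝ} (hv : ContDiff ℝ (⊤ : ℕ∞) (fun p : ℝ × ℝ => v p.1 p.2))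
    {i j m n : ℝ → ℝ} (k R : ℝ)
    (hi : ∀ t, 1 < t → HasDerivAt i (-m t * i t) t) (hj : ∀ t, 1 < t → HasDerivAt j (-n t * j t) t)
    (hm : ContinuousOn m (Set.Ioi 1)) (hn : ContinuousOn n (Set.Ioi 1)) {t : ℝ} (ht : 2 < t) :
    HasDerivAt (fun t => ∫ x in (-R)..R, v t x * P0 (i t) (j t) k x)
      (∫ x in (-R)..R, (deriv (fun s => v s x) t * P0 (i t) (j t) k x
        + v t x * Pt (i t) (j t) k (m t) (n t) x)) t := by
  obtain ⟨hc, hd⟩ := vt_cont hv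
  have hic : ContinuousOn i (Set.Ioi 1) := fun s hs => (hi s hs).continuousAt.continuousWithinAt
  have hjc : ContinuousOn j (Set.Ioi 1) := fun s hs => (hj s hs).continuousAt.continuousWithinAt
  set F' : ℝ → ℝ → ℝ := fun t x => deriv (fun s => v s x) t * P0 (i t) (j t) k x
        + v t x * Pt (i t) (j t) k (m t) (n t) x with hF'
  have hvc := hv.continuous
  have hmaps : Set.MapsTo (fun p : ℝ × ℝ => p.1) (Set.Ioi 1 ×ˢ Set.univ) (Set.Ioi 1) :=
    fun p hp => hp.1
  have ci : ContinuousOn (fun p : ℝ × ℝ => i p.1) (Set.Ioi 1 ×ˢ Set.univ) :=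
    hic.comp continuousOn_fst hmaps
  have cj : ContinuousOn (fun p : ℝ × ℝ => j p.1) (Set.Ioi 1 ×ˢ Set.univ) :=
    hjc.comp continuousOn_fst hmaps
  have cm : ContinuousOn (fun p : ℝ × ℝ => m p.1) (Set.Ioi 1 ×ˢ Set.univ) :=
    hm.comp continuousOn_fst hmaps
  have cn : ContinuousOn (fun p : ℝ × ℝ => n p.1) (Set.Ioi 1 ×ˢ Set.univ) :=
    hn.comp continuousOn_fst hmaps
  have hcF : ContinuousOn (fun p : ℝ × ℝ => F' p.1 p.2) (Set.Ioi 1 ×ˢ Set.univ) := by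
    have c0 := r_cont; have c1 := r1_cont; have c2 := q0_cont; have c3 := Real.continuous_arctan
    simp only [hF', P0, Pt]
    have x1 : ContinuousOn (fun p : ℝ × ℝ => p.2 * i p.1) (Set.Ioi 1 ×ˢ Set.univ) :=
      continuousOn_snd.mul ci
    have x2 : ContinuousOn (fun p : ℝ × ℝ => p.2 * j p.1) (Set.Ioi 1 ×ˢ Set.univ) :=
      continuousOn_snd.mul cj
    have y1 := c3.comp_continuousOn x1
    have y2 := c0.comp_continuousOn x1
    have y3 := c0.comp_continuousOn x2
    have y4 := c1.comp_continuousOn x2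
    have y5 : ContinuousOn (fun p : ℝ × ℝ => q0 (p.2 * k)) (Set.Ioi 1 ×ˢ Set.univ) :=
      Continuous.continuousOn (by fun_prop)
    exact (hc.continuousOn.mul ((y1.mul y3).mul y5)).add (hvc.continuousOn.mul
      ((((cm.neg.mul (x1.mul y2)).mul y3).mul y5).sub
      (((cn.mul y1).mul (x2.mul y4)).mul y5)))
  have hcompact : IsCompact (Set.Icc (t - 1) (t + 1) ×ˢ Set.Icc (-|R|) |R|) :=
    isCompact_Icc.prod isCompact_Icc
  obtain ⟨B, hB⟩ := hcompact.exists_bound_of_continuousOn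
    (hcF.mono (fun p hp => ⟨by have := hp.1.1; simp only [Set.mem_Ioi]; linarith, trivial⟩))
  have hcx : ∀ s, Continuous (v s) := fun s => hvc.comp (by fun_prop : Continuous fun x : ℝ => (s, x))
  have hctx : ∀ s, Continuous (fun x => deriv (fun s => v s x) s) :=
    fun s => hc.comp (by fun_prop : Continuous fun x : ℝ => (s, x))
  refine (intervalIntegral.hasDerivAt_integral_of_dominated_loc_of_deriv_le (F' := F')
    (bound := fun _ => B) (Icc_mem_nhds (by linarith : t - 1 < t) (by linarith : t < t + 1))
    ?_ ?_ ?_ ?_ ?_ ?_).2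
  · refine Eventually.of_forall fun s => ?_
    exact ((hcx s).mul (P0_cont _ _ _)).aestronglyMeasurable
  · exact ((hcx t).mul (P0_cont _ _ _)).intervalIntegrable _ _
  · exact (((hctx t).mul (P0_cont _ _ _)).add ((hcx t).mul (Pt_cont _ _ _ _ _))).aestronglyMeasurable
  · refine Eventually.of_forall fun x hx s hs => ?_
    refine hB (s, x) ⟨hs, ?_⟩
    rw [Set.uIoc, Set.mem_Ioc] at hx
    have h1 : -|R| ≤ min (-R) R := le_min (neg_le_neg (le_abs_self R)) (neg_abs_le R)
    have h2 : max (-R) R ≤ |R| := max_le (neg_le_abs R) (le_abs_self R)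
    exact ⟨by linarith [hx.1], by linarith [hx.2]⟩
  · exact intervalIntegrable_const
  · refine Eventually.of_forall fun x _ s hs => ?_
    have hs1 : 1 < s := by have := hs.1; linarith
    have e1 := (arctan_der (x * i s)).comp s ((hi s hs1).const_mul x)
    have e2 := (r_der (x * j s)).comp s ((hj s hs1).const_mul x)
    have := (hd s x).mul ((e1.mul e2).mul_const (q0 (x * k)))
    refine this.congr_deriv ?_
    simp only [hF', P0, Pt, Pi.mul_apply, Function.comp]
    ring

end SKdV
namespace SKdV

theorem abs_time {v w : ℝ → ℝ → ℝ} (hv : ContDiff ℝ (⊤ : ℕ∞) (fun p : ℝ × ℝ => v p.1 p.2))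
    (hw : ∀ t, ContDiff ℝ (⊤ : ℕ∞) (w t)) (hw0 : ∀ t x, 0 ≤ w t x) {γ M K : ℝ} (hγ : γ < 0)
    (heq : ∀ t x, deriv (fun s => v s x) t + iteratedDeriv 3 (v t) x + v t x * deriv (v t) x
      = γ * deriv (w t) x)
    (hMv : ∀ t R, 0 ≤ R → ∫ x in (-R)..R, v t x ^ 2 ≤ M)
    (hMw : ∀ t R, 0 ≤ R → ∫ x in (-R)..R, w t x ≤ M)
    {i j h m n κ S E G : ℝ → ℝ}
    (hi : ∀ t, 1 < t → HasDerivAt i (-m t * i t) t) (hj : ∀ t, 1 < t → HasDerivAt j (-n t * j t) t)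
    (hh : ∀ t, 1 < t → HasDerivAt h (κ t * h t) t) (hG : ∀ t, 1 < t → HasDerivAt G (E t) t)
    (hm : ContinuousOn m (Set.Ioi 1)) (hn : ContinuousOn n (Set.Ioi 1)) (hK : 1 ≤ K)
    (bi : ∀ t, 10 ≤ t → 0 < i t ∧ i t ≤ K) (bj : ∀ t, 10 ≤ t → 0 < j t ∧ j t ≤ K * i t)
    (bh : ∀ t, 10 ≤ t → 0 < h t ∧ h t ≤ K) (bG : ∀ t, 10 ≤ t → |G t| ≤ K)
    (bm : ∀ t, 10 ≤ t → |m t| ≤ S t) (bn : ∀ t, 10 ≤ t → |n t| ≤ S t)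
    (bκ : ∀ t, 10 ≤ t → |κ t| ≤ S t)
    (e1 : ∀ t, 10 ≤ t → h t * (S t / √(j t)) ≤ K * E t)
    (e2 : ∀ t, 10 ≤ t → h t * (j t ^ 3 / √(j t)) ≤ K * E t)
    (e3 : ∀ t, 10 ≤ t → h t * (i t ^ 3 / √(i t)) ≤ K * E t)
    (e4 : ∀ t, 10 ≤ t → h t * j t ≤ K * E t)
    (e5 : ∀ t, 10 ≤ t → h t / √(j t) ≤ K) :
    ∃ C : ℝ, ∀ N : ℝ, 10 ≤ N → ∫⁻ t in Set.Ioc 10 N, ENNReal.ofReal (h t * (i t *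
      ∫ x in (-N)..N, (1 / 2 * v t x ^ 2 - γ * w t x) * (r (x * i t) * r (x * j t))))
        ≤ ENNReal.ofReal C := by
  have hM : 0 ≤ M := by simpa using hMv 0 0 le_rfl
  set Q1 := (M + 4) * (7 * K + 72 * K + 43 * K ^ 3) + 2 * (1 - γ) * M * K with hQ1
  set Q2 := 1728 * K ^ 5 * (M + 4) + 16 * K * (1 - γ) * M with hQ2
  have h1γ : 0 < 1 - γ := by linarith
  have hQ10 : 0 ≤ Q1 := by positivity
  have hQ20 : 0 ≤ Q2 := by positivity
  refine ⟨4 * (2 * (2 * K * (M + 4) + Q1 * K + Q2)), fun N hN => ?_⟩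
  obtain ⟨R, hR⟩ : ∃ R, R = 2 * N := ⟨_, rfl⟩
  obtain ⟨k, hk⟩ : ∃ k, k = R⁻¹ := ⟨_, rfl⟩
  have hR0 : 0 < R := by rw [hR]; linarith
  have hRk : R * k = 1 := by rw [hk]; exact mul_inv_cancel₀ hR0.ne'
  have hk0 : 0 < k := by rw [hk]; positivity
  have hk1 : k ≤ 1 := by
    by_contra hcon
    push Not at hcon
    nlinarith
  have hvc := hv.continuous
  have hcx : ∀ s, Continuous (v s) := fun s => hvc.comp (by fun_prop : Continuous fun x : ℝ => (s, x))
  have hvx : ∀ s, ContDiff ℝ (⊤ : ℕ∞) (v s) := fun s =>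
    hv.comp (by fun_prop : ContDiff ℝ (⊤ : ℕ∞) fun x : ℝ => (s, x))
  have hctx : ∀ s, Continuous (fun x => deriv (fun s => v s x) s) :=
    fun s => (vt_cont hv).1.comp (by fun_prop : Continuous fun x : ℝ => (s, x))
  set I : ℝ → ℝ := fun t => ∫ x in (-R)..R, v t x * P0 (i t) (j t) k x with hI
  set D : ℝ → ℝ := fun t => ∫ x in (-R)..R, (deriv (fun s => v s x) t * P0 (i t) (j t) k x
        + v t x * Pt (i t) (j t) k (m t) (n t) x) with hD
  set J : ℝ → ℝ := fun t => h t * I t + Q1 * G t + Q2 * k * t with hJ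
  set J' : ℝ → ℝ := fun t => h t * (D t + κ t * I t) + Q1 * E t + Q2 * k with hJ'
  have hJd : ∀ t, 2 < t → HasDerivAt J (J' t) t := by
    intro t ht
    have d1 := time_der hv k R hi hj hm hn ht
    have := (((hh t (by linarith)).mul d1).add ((hG t (by linarith)).const_mul Q1)).add
      ((hasDerivAt_id t).const_mul (Q2 * k))
    refine this.congr_deriv ?_
    simp only [hJ', hD, hI]; ring
  set Ψ : ℝ → ℝ := fun t => ∫ x in (-R)..R, (1 / 2 * v t x ^ 2 - γ * w t x) *
    (r (x * i t) * r (x * j t) * q0 (x * k)) with hΨ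
  have hpos : ∀ t x, 0 ≤ 1 / 2 * v t x ^ 2 - γ * w t x := by
    intro t x
    have := hw0 t x; nlinarith [sq_nonneg (v t x)]
  have hlow : ∀ t, 10 ≤ t → h t * (i t * Ψ t) ≤ J' t := by
    intro t ht
    obtain ⟨hi0, hiK⟩ := bi t ht
    obtain ⟨hj0, hjK⟩ := bj t ht
    obtain ⟨hh0, hhK⟩ := bh t ht
    have sp := spatial (hcx t) (hw t).continuous (hw0 t) hγ hRk hR0 (hMv t R hR0.le)
      (hMw t R hR0.le) hi0 hj0 hK hiK hjK hk1 (bm t ht) (bn t ht) (bκ t ht)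
    have wk := weak (i := i t) (j := j t) (hvx t) (hw t) (hctx t) hRk (heq t)
    have c3 := P0_cont (i t) (j t) k
    have c4 := P1_cont (i t) (j t) k; have c5 := P3_cont (i t) (j t) k
    have c6 := Pt_cont (i t) (j t) k (m t) (n t)
    have cv := hcx t
    have cw := (hw t).continuous
    have cvt := hctx t
    have hDI : D t + κ t * I t = ∫ x in (-R)..R, (v t x * (Pt (i t) (j t) k (m t) (n t) x
        + κ t * P0 (i t) (j t) k x) + (v t x * P3 (i t) (j t) k x
        + (1 / 2 * v t x ^ 2 - γ * w t x) * P1 (i t) (j t) k x)) := by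
      rw [intervalIntegral.integral_add (Continuous.intervalIntegrable (by fun_prop) _ _)
        (Continuous.intervalIntegrable (by fun_prop) _ _), ← wk, hD, hI]
      simp only
      rw [← intervalIntegral.integral_const_mul, ← intervalIntegral.integral_add
        (Continuous.intervalIntegrable (by fun_prop) _ _)
        (Continuous.intervalIntegrable (by fun_prop) _ _), ← intervalIntegral.integral_add
        (Continuous.intervalIntegrable (by fun_prop) _ _)
        (Continuous.intervalIntegrable (by fun_prop) _ _)]
      congr 1
      funext x
      ring
    rw [← hDI] at sp
    have sp2 := mul_le_mul_of_nonneg_left sp hh0.le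
    have g1 := e1 t ht
    have g2 := e2 t ht
    have g3 := e3 t ht
    have g4 := e4 t ht
    have g5 := e5 t ht
    have hE : 0 ≤ K * E t := le_trans (by positivity) g4
    have f1 : h t * ((7 * S t + 72 * j t ^ 3 + 1728 * K ^ 4 * k) * ((M + 4) / √(j t))
        + 43 * K ^ 2 * i t ^ 3 * ((M + 4) / √(i t)) + (2 * j t + 16 * k) * ((1 - γ) * M))
        ≤ Q1 * E t + Q2 * k := by
      have : h t * ((7 * S t + 72 * j t ^ 3 + 1728 * K ^ 4 * k) * ((M + 4) / √(j t))
        + 43 * K ^ 2 * i t ^ 3 * ((M + 4) / √(i t)) + (2 * j t + 16 * k) * ((1 - γ) * M)) =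
        7 * (M + 4) * (h t * (S t / √(j t))) + 72 * (M + 4) * (h t * (j t ^ 3 / √(j t)))
        + 1728 * K ^ 4 * k * (M + 4) * (h t / √(j t))
        + 43 * K ^ 2 * (M + 4) * (h t * (i t ^ 3 / √(i t))) + 2 * ((1 - γ) * M) * (h t * j t)
        + 16 * k * ((1 - γ) * M) * h t := by ring
      rw [this]
      have k1 := mul_le_mul_of_nonneg_left g1 (by positivity : 0 ≤ 7 * (M + 4))
      have k2 := mul_le_mul_of_nonneg_left g2 (by positivity : 0 ≤ 72 * (M + 4))
      have k3 := mul_le_mul_of_nonneg_left g5 (by positivity : 0 ≤ 1728 * K ^ 4 * k * (M + 4))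
      have k4 := mul_le_mul_of_nonneg_left g3 (by positivity : 0 ≤ 43 * K ^ 2 * (M + 4))
      have k5 := mul_le_mul_of_nonneg_left g4 (by positivity : 0 ≤ 2 * ((1 - γ) * M))
      have k6 := mul_le_mul_of_nonneg_left hhK (by positivity : 0 ≤ 16 * k * ((1 - γ) * M))
      have : Q1 * E t + Q2 * k = 7 * (M + 4) * (K * E t) + 72 * (M + 4) * (K * E t)
        + 1728 * K ^ 4 * k * (M + 4) * K + 43 * K ^ 2 * (M + 4) * (K * E t)
        + 2 * ((1 - γ) * M) * (K * E t) + 16 * k * ((1 - γ) * M) * K := by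
        rw [hQ1, hQ2]; ring
      rw [this]
      linarith
    rw [mul_sub] at sp2
    simp only [hJ']
    linarith
  have hJb : ∀ t, 10 ≤ t → t ≤ N → |J t| ≤ 2 * K * (M + 4) + Q1 * K + Q2 := by
    intro t ht htN
    obtain ⟨hj0, hjK⟩ := bj t ht
    obtain ⟨hh0, hhK⟩ := bh t ht
    have hIb : |I t| ≤ 2 * ((M + 4) / √(j t)) := by
      have c3 := P0_cont (i t) (j t) k
      have cv := hcx t
      have cr := r_cont
      calc |I t| ≤ ∫ x in (-R)..R, |v t x * P0 (i t) (j t) k x| :=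
            intervalIntegral.abs_integral_le_integral_abs (by linarith)
        _ ≤ ∫ x in (-R)..R, 2 * (|v t x| * r (x * j t)) := by
            apply intervalIntegral.integral_mono_on (by linarith)
            · exact (Continuous.intervalIntegrable (by fun_prop) _ _)
            · exact (Continuous.intervalIntegrable (by fun_prop) _ _)
            intro x hx
            have hxk : |x * k| ≤ 1 := by
              rw [abs_mul, abs_of_pos hk0, ← hRk]
              have : |x| ≤ R := abs_le.2 hx
              gcongr
            rw [abs_mul]
            have := P0_bd (i := i t) (j := j t) hxk
            nlinarith [abs_nonneg (v t x)]
        _ ≤ _ := by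
            rw [intervalIntegral.integral_const_mul]
            have := cs cv hj0 hR0.le (hMv t R hR0.le)
            linarith
    have a1 : |h t * I t| ≤ 2 * K * (M + 4) := by
      rw [abs_mul, abs_of_pos hh0]
      have := mul_le_mul_of_nonneg_left hIb hh0.le
      have g5 := mul_le_mul_of_nonneg_left (e5 t ht) (by positivity : 0 ≤ 2 * (M + 4))
      have : h t * (2 * ((M + 4) / √(j t))) = 2 * (M + 4) * (h t / √(j t)) := by ring
      linarith
    have a2 : |Q1 * G t| ≤ Q1 * K := by
      rw [abs_mul, abs_of_nonneg hQ10]; gcongr; exact bG t ht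
    have a3 : |Q2 * k * t| ≤ Q2 := by
      rw [abs_of_nonneg (by positivity)]
      have : k * t ≤ 1 := by rw [← hRk]; nlinarith
      nlinarith
    simp only [hJ]
    have := abs_add_le (h t * I t + Q1 * G t) (Q2 * k * t)
    have := abs_add_le (h t * I t) (Q1 * G t)
    linarith
  have hΨ0 : ∀ t, 0 ≤ Ψ t := by
    intro t
    apply intervalIntegral.integral_nonneg (by linarith)
    intro x _
    have := hpos t x
    have := r_pos (x * i t); have := r_pos (x * j t); have := q0_nonneg (x * k)
    positivity
  have hJ0 : ∀ t, 10 ≤ t → 0 ≤ J' t := fun t ht =>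
    le_trans (mul_nonneg (bh t ht).1.le (mul_nonneg (bi t ht).1.le (hΨ0 t))) (hlow t ht)
  have hcmp : ∀ t, ∫ x in (-N)..N, (1 / 2 * v t x ^ 2 - γ * w t x) * (r (x * i t) * r (x * j t))
      ≤ 4 * Ψ t := by
    intro t
    have cv := hcx t
    have cw := (hw t).continuous
    have cr := r_cont
    have cq := q0_cont
    rw [hΨ]
    simp only
    rw [← intervalIntegral.integral_const_mul]
    calc _ ≤ ∫ x in (-N)..N, 4 * ((1 / 2 * v t x ^ 2 - γ * w t x) *
          (r (x * i t) * r (x * j t) * q0 (x * k))) := by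
          apply intervalIntegral.integral_mono_on (by linarith)
          · exact (Continuous.intervalIntegrable (by fun_prop) _ _)
          · exact (Continuous.intervalIntegrable (by fun_prop) _ _)
          intro x hx
          have hq : 1 ≤ 4 * q0 (x * k) := by
            have hNk : N * k = 1 / 2 := by rw [hR] at hRk; linarith
            have h1 : |x * k| ≤ 1 / 2 := by
              rw [abs_mul, abs_of_pos hk0, ← hNk]
              have : |x| ≤ N := abs_le.2 hx
              gcongr
            have h2 : (x * k) ^ 2 ≤ (1 / 2) ^ 2 := by
              rw [← sq_abs]; gcongr
            unfold q0
            have h3 : (3 / 4 : ℝ) ≤ 1 - (x * k) ^ 2 := by linarith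
            have : (3 / 4 : ℝ) ^ 4 ≤ (1 - (x * k) ^ 2) ^ 4 := by gcongr
            norm_num at this ⊢
            linarith
          have hz : 0 ≤ (1 / 2 * v t x ^ 2 - γ * w t x) * (r (x * i t) * r (x * j t)) :=
            mul_nonneg (hpos t x) (mul_nonneg (r_pos _).le (r_pos _).le)
          nlinarith
      _ ≤ _ := by
          apply intervalIntegral.integral_mono_interval (by linarith) (by linarith) (by linarith)
          · refine Eventually.of_forall fun x => ?_
            have := hpos t x
            have := r_pos (x * i t); have := r_pos (x * j t); have := q0_nonneg (x * k)
            simp only [Pi.zero_apply]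
            positivity
          · exact (Continuous.intervalIntegrable (by fun_prop) _ _)
  have hcont : ContinuousOn J (Set.Icc 10 N) := fun t ht =>
    (hJd t (by linarith [ht.1])).continuousAt.continuousWithinAt
  have hint : IntegrableOn J' (Set.Ioc 10 N) :=
    intervalIntegral.integrableOn_deriv_of_nonneg hcont
      (fun t ht => hJd t (by linarith [ht.1])) (fun t ht => hJ0 t ht.1.le)
  have hftc : ∫ t in Set.Ioc 10 N, J' t = J N - J 10 := by
    rw [← intervalIntegral.integral_of_le hN]
    apply intervalIntegral.integral_eq_sub_of_hasDerivAt
    · intro t ht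
      rw [Set.uIcc_of_le hN] at ht
      exact hJd t (by linarith [ht.1])
    · exact (intervalIntegrable_iff_integrableOn_Ioc_of_le hN).2 hint
  calc _ ≤ ∫⁻ t in Set.Ioc 10 N, ENNReal.ofReal (4 * J' t) := by
        apply setLIntegral_mono' measurableSet_Ioc
        intro t ht
        apply ENNReal.ofReal_le_ofReal
        have ht' : 10 ≤ t := ht.1.le
        have := hlow t ht'
        have h2 := mul_le_mul_of_nonneg_left (hcmp t)
          (mul_nonneg (bh t ht').1.le (bi t ht').1.le)
        linarith
    _ = ENNReal.ofReal (∫ t in Set.Ioc 10 N, 4 * J' t) := by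
        rw [ofReal_integral_eq_lintegral_ofReal (hint.const_mul 4)]
        filter_upwards [ae_restrict_mem measurableSet_Ioc] with t ht
        have := hJ0 t ht.1.le
        simp only [Pi.zero_apply]
        positivity
    _ ≤ _ := by
        apply ENNReal.ofReal_le_ofReal
        rw [integral_const_mul, hftc]
        have b1 := abs_le.1 (hJb N hN le_rfl)
        have b2 := abs_le.1 (hJb 10 le_rfl hN)
        linarith

end SKdV
namespace SKdV

lemma X_lower {p q : ℝ} (hp : 0 < p) (hq : 0 < q) : ∃ c : ℝ, 0 < c ∧ ∀ t : ℝ, 10 ≤ t →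
    c * Real.log t ≤ t ^ p / Real.log t ^ q := by
  set δ := p / (1 + q) with hδ
  have hδ0 : 0 < δ := by positivity
  refine ⟨δ ^ (1 + q), by positivity, fun t ht => ?_⟩
  have ht0 : 0 < t := by linarith
  have hl : 0 < Real.log t := Real.log_pos (by linarith)
  have h1 := Real.log_le_rpow_div ht0.le hδ0
  have h2 : δ * Real.log t ≤ t ^ δ := by
    rw [le_div_iff₀ hδ0] at h1; linarith
  have h3 : (δ * Real.log t) ^ (1 + q) ≤ (t ^ δ) ^ (1 + q) := by gcongr
  rw [Real.mul_rpow hδ0.le hl.le, ← Real.rpow_mul ht0.le, Real.rpow_add hl, Real.rpow_one] at h3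
  have h4 : δ * (1 + q) = p := by rw [hδ]; field_simp
  rw [h4] at h3
  rw [le_div_iff₀ (by positivity)]
  linarith

lemma log_ten {t : ℝ} (ht : 10 ≤ t) : 1 ≤ Real.log t := by
  rw [Real.le_log_iff_exp_le (by linarith)]
  have := Real.exp_one_lt_d9
  linarith

lemma p52 {x : ℝ} (hx : 0 < x) : x ^ 3 / √x = x ^ (5 / 2 : ℝ) := by
  rw [show (5 / 2 : ℝ) = ((3 : ℕ) : ℝ) - 1 / 2 by norm_num, Real.rpow_sub hx, Real.rpow_natCast,
    Real.sqrt_eq_rpow]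

lemma lam_der {p q t : ℝ} (ht : 1 < t) : HasDerivAt (fun t : ℝ => t ^ p / Real.log t ^ q)
    ((p / t - q / (t * Real.log t)) * (t ^ p / Real.log t ^ q)) t := by
  have ht0 : 0 < t := by linarith
  have hl : 0 < Real.log t := Real.log_pos ht
  have h1 := Real.hasDerivAt_rpow_const (x := t) (p := p) (Or.inl ht0.ne')
  have h2 := (Real.hasDerivAt_log ht0.ne').rpow_const (p := q) (Or.inl hl.ne')
  refine (h1.div h2 (by positivity)).congr_deriv ?_
  rw [Real.rpow_sub_one ht0.ne', Real.rpow_sub_one hl.ne']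
  have : (Real.log t ^ q) ≠ 0 := by positivity
  field_simp

lemma eta_der {p q t : ℝ} (ht : 1 < t) : HasDerivAt (fun t : ℝ => t ^ (1 - p) * Real.log t ^ (1 + q))
    (((1 - p) / t + (1 + q) / (t * Real.log t)) * (t ^ (1 - p) * Real.log t ^ (1 + q))) t := by
  have ht0 : 0 < t := by linarith
  have hl : 0 < Real.log t := Real.log_pos ht
  have h1 := Real.hasDerivAt_rpow_const (x := t) (p := 1 - p) (Or.inl ht0.ne')
  have h2 := (Real.hasDerivAt_log ht0.ne').rpow_const (p := 1 + q) (Or.inl hl.ne')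
  refine (h1.mul h2).congr_deriv ?_
  rw [Real.rpow_sub_one ht0.ne', Real.rpow_sub_one hl.ne']
  field_simp

lemma G_der {ε t : ℝ} (hε : 0 < ε) (ht : 1 < t) :
    HasDerivAt (fun t : ℝ => -(1 / ε) * Real.log t ^ (-ε))
    (1 / (t * Real.log t) * Real.log t ^ (-ε)) t := by
  have ht0 : 0 < t := by linarith
  have hl : 0 < Real.log t := Real.log_pos ht
  have h2 := (Real.hasDerivAt_log ht0.ne').rpow_const (p := -ε) (Or.inl hl.ne')
  refine (h2.const_mul (-(1 / ε))).congr_deriv ?_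
  rw [Real.rpow_sub_one hl.ne']
  field_simp

lemma inv_der {f : ℝ → ℝ} {m t : ℝ} (hf : HasDerivAt f (m * f t) t) (h0 : f t ≠ 0) :
    HasDerivAt (fun t => (f t)⁻¹) (-m * (f t)⁻¹) t := by
  refine (hf.inv h0).congr_deriv ?_
  field_simp

set_option maxHeartbeats 4000000 in
theorem time_main {v w : ℝ → ℝ → ℝ} (hv : ContDiff ℝ (⊤ : ℕ∞) (fun p : ℝ × ℝ => v p.1 p.2))
    (hw : ∀ t, ContDiff ℝ (⊤ : ℕ∞) (w t)) (hw0 : ∀ t x, 0 ≤ w t x) {γ M : ℝ} (hγ : γ < 0)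
    (heq : ∀ t x, deriv (fun s => v s x) t + iteratedDeriv 3 (v t) x + v t x * deriv (v t) x
      = γ * deriv (w t) x)
    (hMv : ∀ t R, 0 ≤ R → ∫ x in (-R)..R, v t x ^ 2 ≤ M)
    (hMw : ∀ t R, 0 ≤ R → ∫ x in (-R)..R, w t x ≤ M)
    (p q p₂ : ℝ) (hq : 0 < q) (hp₂ : 1 < p₂)
    (hp : 0 < p) (hp' : p ≤ 2 / (p₂ + 2)) (a b : ℝ) (ha : 0 < a) (hb : 0 < b)
    (X η i j h : ℝ → ℝ) (hX : X = fun t => t ^ p / Real.log t ^ q)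
    (hη : η = fun t => t ^ (1 - p) * Real.log t ^ (1 + q))
    (hi : i = fun t => (a * X t)⁻¹) (hj : j = fun t => (b * X t ^ p₂)⁻¹) (hh : h = fun t => (η t)⁻¹) :
    ∃ C : ℝ, ∀ N : ℝ, 10 ≤ N → ∫⁻ t in Set.Ioc 10 N, ENNReal.ofReal (h t * (i t *
      ∫ x in (-N)..N, (1 / 2 * v t x ^ 2 - γ * w t x) * (r (x * i t) * r (x * j t))))
        ≤ ENNReal.ofReal C := by
  set σ := (p₂ + 2) / 2 with hσ
  have hσ0 : 0 < σ := by positivity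
  have hpσ : p * σ ≤ 1 := by
    rw [le_div_iff₀ (by linarith)] at hp'
    rw [hσ]; linarith
  have hp1 : p ≤ 1 := by
    have : 1 ≤ σ := by rw [hσ]; linarith
    nlinarith
  set ε := min 1 (min (p₂ - 1) (q * σ)) with hε
  have hε0 : 0 < ε := lt_min one_pos (lt_min (by linarith) (by positivity))
  have hε1 : ε ≤ 1 := min_le_left _ _
  have hε2 : ε ≤ p₂ - 1 := (min_le_right _ _).trans (min_le_left _ _)
  have hε3 : ε ≤ q * σ := (min_le_right _ _).trans (min_le_right _ _)
  obtain ⟨c, hc0, hc⟩ := X_lower hp hq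
  have lpos : ∀ t : ℝ, 1 < t → 0 < Real.log t := fun t ht => Real.log_pos ht
  have Xpos : ∀ t, 1 < t → 0 < X t := by
    intro t ht
    have := lpos t ht
    rw [hX]; simp only
    have : 0 < t := by linarith
    positivity
  have ηpos : ∀ t, 1 < t → 0 < η t := by
    intro t ht
    have := lpos t ht
    rw [hη]; simp only
    have : 0 < t := by linarith
    positivity
  -- algebra
  have hhX : ∀ t, 1 < t → h t = X t / (t * Real.log t) := by
    intro t ht
    have hl := lpos t ht
    have ht0 : 0 < t := by linarith
    have h1 : η t * X t = t * Real.log t := by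
      rw [hη, hX]; simp only
      rw [Real.rpow_sub ht0, Real.rpow_add hl, Real.rpow_one, Real.rpow_one]
      have : t ^ p ≠ 0 := by positivity
      have : Real.log t ^ q ≠ 0 := by positivity
      field_simp
    rw [hh]; simp only
    rw [← h1]
    have := (ηpos t ht).ne'
    have := (Xpos t ht).ne'
    field_simp
  have hXle : ∀ ρ, ε ≤ ρ → ∀ t, 10 ≤ t → X t ^ (-ρ) ≤ c ^ (-ρ) * Real.log t ^ (-ε) := by
    intro ρ hρ t ht
    have hl := log_ten ht
    have h1 : X t ^ (-ρ) ≤ (c * Real.log t) ^ (-ρ) :=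
      Real.rpow_le_rpow_of_nonpos (by positivity) (by rw [hX]; exact hc t ht) (by linarith)
    refine h1.trans ?_
    rw [Real.mul_rpow hc0.le (by linarith)]
    have : Real.log t ^ (-ρ) ≤ Real.log t ^ (-ε) :=
      Real.rpow_le_rpow_of_exponent_le hl (by linarith)
    gcongr
  have hXσ : ∀ t, 10 ≤ t → X t ^ σ ≤ t * Real.log t ^ (-ε) := by
    intro t ht
    have hl := log_ten ht
    have ht0 : 0 < t := by linarith
    rw [hX]; simp only
    rw [Real.div_rpow (by positivity) (by positivity), ← Real.rpow_mul ht0.le,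
      ← Real.rpow_mul (by linarith), div_eq_mul_inv, ← Real.rpow_neg (by linarith)]
    have h1 : t ^ (p * σ) ≤ t ^ (1 : ℝ) := Real.rpow_le_rpow_of_exponent_le (by linarith) hpσ
    rw [Real.rpow_one] at h1
    have h2 : Real.log t ^ (-(q * σ)) ≤ Real.log t ^ (-ε) :=
      Real.rpow_le_rpow_of_exponent_le hl (by linarith)
    gcongr
  have lε : ∀ t, 10 ≤ t → Real.log t ^ (-ε) ≤ 1 := by
    intro t ht
    exact Real.rpow_le_one_of_one_le_of_nonpos (log_ten ht) (by linarith)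
  have sj : ∀ t, 1 < t → 1 / √(j t) = √b * X t ^ (p₂ / 2) := by
    intro t ht
    have hx := Xpos t ht
    rw [hj]; simp only
    rw [Real.sqrt_inv, one_div, inv_inv, Real.sqrt_mul hb.le, Real.sqrt_eq_rpow (X t ^ p₂),
      ← Real.rpow_mul hx.le]
    ring_nf
  have sj2 : ∀ t, 1 < t → h t / √(j t) = √b * X t ^ σ / (t * Real.log t) := by
    intro t ht
    rw [div_eq_mul_one_div, sj t ht, hhX t ht, hσ]
    have : X t ^ ((p₂ + 2) / 2) = X t * X t ^ (p₂ / 2) := by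
      rw [show (p₂ + 2) / 2 = 1 + p₂ / 2 by ring, Real.rpow_add (Xpos t ht), Real.rpow_one]
    rw [this]; ring
  set s := p₂ * (p + q) + 2 + q with hs
  have hs0 : 0 < s := by positivity
  set μ : ℝ → ℝ := fun t => p / t - q / (t * Real.log t) with hμ
  have μb : ∀ t, 10 ≤ t → |μ t| ≤ (p + q) / t := by
    intro t ht
    have hl := log_ten ht
    have ht0 : 0 < t := by linarith
    have h1 : 0 < p / t := by positivity
    have h2 : 0 < q / (t * Real.log t) := by positivity
    have h3 : q / (t * Real.log t) ≤ q / t := by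
      gcongr; nlinarith
    rw [add_div, hμ, abs_le]
    constructor <;> simp only <;> linarith [div_pos hq ht0]
  have Xder : ∀ t, 1 < t → HasDerivAt X (μ t * X t) t := by
    intro t ht
    rw [hX]; exact lam_der ht
  have μc : ContinuousOn μ (Set.Ioi 1) := by
    intro t ht
    have ht : 1 < t := ht
    have hl := lpos t ht
    have ht0 : t ≠ 0 := by positivity
    have h3 : t * Real.log t ≠ 0 := by positivity
    apply ContinuousAt.continuousWithinAt
    have h4 : ContinuousAt Real.log t := Real.continuousAt_log ht0
    exact (continuousAt_const.div continuousAt_id ht0).sub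
      (continuousAt_const.div (continuousAt_id.mul h4) h3)
  set K := 1 + (a * c)⁻¹ + a / b * c ^ (-(p₂ - 1)) + 1 / ε + s * √b + √b
    + b ^ (-(5 / 2) : ℝ) * c ^ (-(5 * p₂ / 2 - 1)) + a ^ (-(5 / 2) : ℝ) * c ^ (-(3 / 2) : ℝ)
    + b⁻¹ * c ^ (-(p₂ - 1)) with hK
  have k1 : 0 < (a * c)⁻¹ := by positivity
  have k2 : 0 < a / b * c ^ (-(p₂ - 1)) := by positivity
  have k3 : 0 < 1 / ε := by positivity
  have k4 : 0 < s * √b := by positivity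
  have k5 : 0 < √b := by positivity
  have k6 : 0 < b ^ (-(5 / 2) : ℝ) * c ^ (-(5 * p₂ / 2 - 1)) := by positivity
  have k7 : 0 < a ^ (-(5 / 2) : ℝ) * c ^ (-(3 / 2) : ℝ) := by positivity
  have k8 : 0 < b⁻¹ * c ^ (-(p₂ - 1)) := by positivity
  have Epos : ∀ t : ℝ, 10 ≤ t → 0 < 1 / (t * Real.log t) * Real.log t ^ (-ε) := by
    intro t ht
    have hl := log_ten ht
    have ht0 : 0 < t := by linarith
    positivity
  -- generic form of the last estimates
  have gen : ∀ ρ A, ε ≤ ρ → 0 < A → A * c ^ (-ρ) ≤ K → ∀ t, 10 ≤ t →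
      A * X t ^ (-ρ) / (t * Real.log t) ≤ K * (1 / (t * Real.log t) * Real.log t ^ (-ε)) := by
    intro ρ A hρ hA hAK t ht
    have hl := log_ten ht
    have ht0 : 0 < t := by linarith
    have h1 := hXle ρ hρ t ht
    have h2 : A * X t ^ (-ρ) ≤ K * Real.log t ^ (-ε) := by
      calc A * X t ^ (-ρ) ≤ A * (c ^ (-ρ) * Real.log t ^ (-ε)) := by gcongr
        _ = (A * c ^ (-ρ)) * Real.log t ^ (-ε) := by ring
        _ ≤ _ := by gcongr
    calc _ ≤ K * Real.log t ^ (-ε) / (t * Real.log t) := by gcongr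
      _ = _ := by ring
  refine abs_time (K := K) (m := μ) (n := fun t => p₂ * μ t)
    (κ := fun t => -((1 - p) / t + (1 + q) / (t * Real.log t))) (S := fun t => s / t)
    (E := fun t => 1 / (t * Real.log t) * Real.log t ^ (-ε))
    (G := fun t => -(1 / ε) * Real.log t ^ (-ε)) hv hw hw0 hγ heq hMv hMw
    ?_ ?_ ?_ (fun t ht => G_der hε0 ht) μc (continuousOn_const.mul μc) (by linarith)
    ?_ ?_ ?_ ?_ ?_ ?_ ?_ ?_ ?_ ?_ ?_ ?_
  · intro t ht
    rw [hi]
    refine inv_der (f := fun t => a * X t) ?_ (mul_pos ha (Xpos t ht)).ne'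
    refine ((Xder t ht).const_mul a).congr_deriv ?_
    ring
  · intro t ht
    have hx := Xpos t ht
    rw [hj]
    refine inv_der (f := fun t => b * X t ^ p₂) ?_ (by positivity)
    refine (((Xder t ht).rpow_const (p := p₂) (Or.inl hx.ne')).const_mul b).congr_deriv ?_
    rw [Real.rpow_sub_one hx.ne']
    field_simp
  · intro t ht
    rw [hh]
    refine inv_der (f := η) ?_ (ηpos t ht).ne'
    rw [hη]; exact eta_der ht
  · -- bi
    intro t ht
    have hx := Xpos t (by linarith)
    have hl := log_ten ht
    rw [hi]; simp only
    refine ⟨by positivity, ?_⟩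
    have hcX : c ≤ X t := by
      have := hc t ht
      rw [hX]; simp only; nlinarith
    have : (a * X t)⁻¹ ≤ (a * c)⁻¹ := by gcongr
    linarith
  · -- bj
    intro t ht
    have hx := Xpos t (by linarith)
    rw [hi, hj]; simp only
    refine ⟨by positivity, ?_⟩
    have h1 := hXle (p₂ - 1) hε2 t ht
    have h2 := lε t ht
    have h3 : X t ^ (-(p₂ - 1)) ≤ c ^ (-(p₂ - 1)) := by
      have : 0 < c ^ (-(p₂ - 1)) := by positivity
      nlinarith
    have h4 : (b * X t ^ p₂)⁻¹ = a / b * X t ^ (-(p₂ - 1)) * (a * X t)⁻¹ := by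
      rw [neg_sub, Real.rpow_sub hx, Real.rpow_one]
      have : X t ^ p₂ ≠ 0 := by positivity
      field_simp
    rw [h4]
    have h5 : a / b * X t ^ (-(p₂ - 1)) ≤ K := by
      have : a / b * X t ^ (-(p₂ - 1)) ≤ a / b * c ^ (-(p₂ - 1)) := by gcongr
      linarith
    gcongr
  · -- bh
    intro t ht
    have hη0 := ηpos t (by linarith)
    have hl := log_ten ht
    rw [hh]; simp only
    refine ⟨by positivity, ?_⟩
    have : 1 ≤ η t := by
      rw [hη]; simp only
      have h1 : 1 ≤ t ^ (1 - p) := Real.one_le_rpow (by linarith) (by linarith)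
      have h2 : 1 ≤ Real.log t ^ (1 + q) := Real.one_le_rpow hl (by linarith)
      nlinarith
    have : (η t)⁻¹ ≤ 1 := inv_le_one_of_one_le₀ this
    linarith
  · -- bG
    intro t ht
    have hl := log_ten ht
    have h1 := lε t ht
    have h2 : 0 < Real.log t ^ (-ε) := by positivity
    rw [abs_mul, abs_neg, abs_of_pos k3, abs_of_pos h2]
    have : 1 / ε * Real.log t ^ (-ε) ≤ 1 / ε := by nlinarith
    linarith
  · intro t ht
    have ht0 : 0 < t := by linarith
    refine (μb t ht).trans ?_
    gcongr
    rw [hs]; nlinarith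
  · intro t ht
    have ht0 : 0 < t := by linarith
    rw [abs_mul, abs_of_pos (by linarith : 0 < p₂)]
    have h1 := mul_le_mul_of_nonneg_left (μb t ht) (by linarith : 0 ≤ p₂)
    refine h1.trans ?_
    rw [← mul_div_assoc]
    gcongr
    rw [hs]; linarith
  · intro t ht
    have hl := log_ten ht
    have ht0 : 0 < t := by linarith
    have h0 : 0 ≤ 1 - p := by linarith
    rw [abs_neg, abs_of_nonneg (by positivity)]
    have h3 : (1 + q) / (t * Real.log t) ≤ (1 + q) / t := by
      gcongr; nlinarith
    have : (1 - p) / t + (1 + q) / t ≤ s / t := by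
      rw [← add_div]; gcongr; rw [hs]; nlinarith
    linarith
  · -- e1
    intro t ht
    have hl := log_ten ht
    have ht0 : 0 < t := by linarith
    have e : h t * (s / t / √(j t)) = s / t * (h t / √(j t)) := by ring
    rw [e, sj2 t (by linarith)]
    have h1 := hXσ t ht
    calc s / t * (√b * X t ^ σ / (t * Real.log t))
        ≤ s / t * (√b * (t * Real.log t ^ (-ε)) / (t * Real.log t)) := by gcongr
      _ = (s * √b) * (1 / (t * Real.log t) * Real.log t ^ (-ε)) := by field_simp
      _ ≤ _ := by
        have := Epos t ht
        have : s * √b ≤ K := by linarith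
        gcongr
  · -- e2
    intro t ht
    have hx := Xpos t (by linarith)
    have hj0 : 0 < j t := by rw [hj]; simp only; positivity
    have := gen (5 * p₂ / 2 - 1) (b ^ (-(5 / 2) : ℝ)) (by linarith) (by positivity) (by linarith) t ht
    refine le_trans (le_of_eq ?_) this
    rw [p52 hj0, hhX t (by linarith), hj]; simp only
    rw [Real.inv_rpow (by positivity), Real.mul_rpow hb.le (by positivity), ← Real.rpow_mul hx.le,
      mul_inv, ← Real.rpow_neg hb.le, ← Real.rpow_neg hx.le]
    have : X t ^ (-(5 * p₂ / 2 - 1)) = X t * X t ^ (-(p₂ * (5 / 2))) := by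
      rw [show -(5 * p₂ / 2 - 1) = 1 + -(p₂ * (5 / 2)) by ring, Real.rpow_add hx, Real.rpow_one]
    rw [this]; ring
  · -- e3
    intro t ht
    have hx := Xpos t (by linarith)
    have hi0 : 0 < i t := by rw [hi]; simp only; positivity
    have := gen (3 / 2) (a ^ (-(5 / 2) : ℝ)) (by linarith) (by positivity) (by linarith) t ht
    refine le_trans (le_of_eq ?_) this
    rw [p52 hi0, hhX t (by linarith), hi]; simp only
    rw [Real.inv_rpow (by positivity), Real.mul_rpow ha.le (by positivity),
      mul_inv, ← Real.rpow_neg ha.le, ← Real.rpow_neg hx.le]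
    have : X t ^ (-(3 / 2) : ℝ) = X t * X t ^ (-(5 / 2) : ℝ) := by
      rw [show (-(3 / 2) : ℝ) = 1 + -(5 / 2) by norm_num, Real.rpow_add hx, Real.rpow_one]
    rw [this]; ring
  · -- e4
    intro t ht
    have hx := Xpos t (by linarith)
    have := gen (p₂ - 1) (b⁻¹) hε2 (by positivity) (by linarith) t ht
    refine le_trans (le_of_eq ?_) this
    rw [hhX t (by linarith), hj]; simp only
    rw [neg_sub, Real.rpow_sub hx, Real.rpow_one, mul_inv]
    ring
  · -- e5
    intro t ht
    have hl := log_ten ht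
    have ht0 : 0 < t := by linarith
    rw [sj2 t (by linarith)]
    have h1 := hXσ t ht
    have h2 := lε t ht
    have h3 : √b * X t ^ σ / (t * Real.log t) ≤ √b := by
      rw [div_le_iff₀ (by positivity)]
      have : X t ^ σ ≤ t * Real.log t := h1.trans (by gcongr; linarith)
      gcongr
    linarith

end SKdV
namespace SKdV

lemma sech_le (y : ℝ) : 1 / Real.cosh y ≤ 2 * r y := by
  have h1 : Real.cosh y = 1 + 2 * Real.sinh (y / 2) ^ 2 := by
    have := Real.cosh_two_mul (y / 2)
    rw [Real.cosh_sq, show 2 * (y / 2) = y by ring] at this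
    linarith
  have h2 : (y / 2) ^ 2 ≤ Real.sinh (y / 2) ^ 2 := by
    rcases le_total 0 (y / 2) with h | h
    · have := Real.self_le_sinh_iff.2 h
      gcongr
    · have h3 := Real.self_le_sinh_iff.2 (neg_nonneg.2 h)
      rw [Real.sinh_neg] at h3
      nlinarith
  have h3 : (1 + y ^ 2) / 2 ≤ Real.cosh y := by rw [h1]; nlinarith
  unfold r
  rw [div_le_iff₀ (Real.cosh_pos y)]
  have : 0 < 1 + y ^ 2 := by positivity
  have h4 : 1 = 2 * (1 + y ^ 2)⁻¹ * ((1 + y ^ 2) / 2) := by field_simp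
  calc 1 = 2 * (1 + y ^ 2)⁻¹ * ((1 + y ^ 2) / 2) := h4
    _ ≤ _ := by gcongr

lemma exhaust {g : ℝ × ℝ → ENNReal} (hg : Measurable g) {C : ENNReal}
    (hC : ∀ N : ℝ, 10 ≤ N → ∫⁻ t in Set.Ioc 10 N, ∫⁻ x in Set.Ioc (-N) N, g (t, x) ≤ C) :
    ∫⁻ t in Set.Ici (10 : ℝ), ∫⁻ x, g (t, x) ≤ C := by
  set ν := ((volume : Measure ℝ).prod (volume : Measure ℝ)).withDensity g with hν
  set A : ℕ → Set (ℝ × ℝ) := fun n => Set.Ioc 10 (n + 10 : ℝ) ×ˢ Set.Ioc (-(n + 10) : ℝ) (n + 10)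
  have hAm : ∀ n, MeasurableSet (A n) := fun n => measurableSet_Ioc.prod measurableSet_Ioc
  have hmono : Monotone A := by
    intro n m hnm
    have : (n : ℝ) ≤ m := by exact_mod_cast hnm
    exact Set.prod_mono (Set.Ioc_subset_Ioc le_rfl (by linarith))
      (Set.Ioc_subset_Ioc (by linarith) (by linarith))
  have hU : ⋃ n, A n = Set.Ioi 10 ×ˢ Set.univ := by
    ext ⟨t, x⟩
    simp only [Set.mem_iUnion, A, Set.mem_prod, Set.mem_Ioc, Set.mem_Ioi, Set.mem_univ, and_true]
    constructor
    · rintro ⟨n, h⟩; exact h.1.1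
    · intro ht
      obtain ⟨n, hn⟩ := exists_nat_ge (max t |x|)
      have h1 := (le_max_left t |x|).trans hn
      have h2 := (le_max_right t |x|).trans hn
      have h3 := abs_le.1 h2
      exact ⟨n, ⟨ht, by linarith⟩, by linarith [h3.1], by linarith [h3.2]⟩
  have h1 : ∫⁻ t in Set.Ici (10 : ℝ), ∫⁻ x, g (t, x) = ν (Set.Ioi 10 ×ˢ Set.univ) := by
    rw [hν, withDensity_apply _ (measurableSet_Ioi.prod MeasurableSet.univ),
      ← Measure.prod_restrict, lintegral_prod _ hg.aemeasurable, Measure.restrict_univ,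
      restrict_Ioi_eq_restrict_Ici]
  rw [h1, ← hU, hmono.measure_iUnion]
  refine iSup_le fun n => ?_
  rw [hν, withDensity_apply _ (hAm n), ← Measure.prod_restrict, lintegral_prod _ hg.aemeasurable]
  exact hC (n + 10) (by have : (0 : ℝ) ≤ n := Nat.cast_nonneg n
                        linarith)

lemma ofReal_int_le {f : ℝ → ℝ} (hf : ∀ x, 0 ≤ f x) :
    ENNReal.ofReal (∫ x, f x) ≤ ∫⁻ x, ENNReal.ofReal (f x) := by
  by_cases h : Integrable f
  · rw [ofReal_integral_eq_lintegral_ofReal h (Eventually.of_forall hf)]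
  · rw [integral_undef h]; simp

lemma local_mass {f : ℝ → ℝ} (hf : Integrable f) (h0 : ∀ x, 0 ≤ f x) {R : ℝ} (hR : 0 ≤ R) :
    ∫ x in (-R)..R, f x ≤ ∫ x, f x := by
  rw [intervalIntegral.integral_of_le (by linarith)]
  exact setIntegral_le_integral hf (Eventually.of_forall h0)

end SKdV

theorem skdv_weighted_mass_estimate (α β γ : ℝ) (hα : α < 0) (hγ : γ < 0)
    (u : ℝ → ℝ → ℂ) (v : ℝ → ℝ → ℝ) (hsol : IsSKdVSolution α β γ u v)
    (p₁ q₁ p₂ : ℝ) (hq₁ : 0 < q₁) (hp₂ : 1 < p₂)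
    (hp₁ : 0 < p₁) (hp₁' : p₁ ≤ 2 / (p₂ + 2))
    (lam₁ lam₂ η : ℝ → ℝ)
    (hlam₁ : ∀ t, lam₁ t = t ^ p₁ / Real.log t ^ q₁)
    (hlam₂ : ∀ t, lam₂ t = lam₁ t ^ p₂)
    (hη : ∀ t, η t = t ^ (1 - p₁) * Real.log t ^ (1 + q₁))
    (a b : ℝ) (ha : 0 < a) (hb : 0 < b) :
    ∫⁻ t in Set.Ici (10 : ℝ),
        ENNReal.ofReal ((1 / (η t * lam₁ t)) *
          ∫ x : ℝ, ((v t x) ^ 2 + ‖u t x‖ ^ 2) *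
            (1 / Real.cosh (x / (a * lam₁ t))) *
            (1 / Real.cosh (x / (b * lam₂ t)))) < ⊤ := by
  obtain ⟨hu, hv, hus, hvs, -, heq, C, hC⟩ := hsol
  have hux : ∀ s, ContDiff ℝ (⊤ : ℕ∞) (u s) := fun s =>
    hu.comp (by fun_prop : ContDiff ℝ (⊤ : ℕ∞) fun x : ℝ => (s, x))
  have hvx : ∀ s, ContDiff ℝ (⊤ : ℕ∞) (v s) := fun s =>
    hv.comp (by fun_prop : ContDiff ℝ (⊤ : ℕ∞) fun x : ℝ => (s, x))
  have hui : ∀ t, Integrable (fun x => ‖u t x‖ ^ 2) := by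
    intro t
    obtain ⟨f, hf⟩ := hus t
    have := (f.memLp 2 volume).integrable_norm_pow (p := 2) (by norm_num)
    simpa only [hf] using this
  have hvi : ∀ t, Integrable (fun x => v t x ^ 2) := by
    intro t
    obtain ⟨f, hf⟩ := hvs t
    have := (f.memLp 2 volume).integrable_sq
    simpa only [hf] using this
  have hn1 : ∀ t, 0 ≤ ∫ x : ℝ, ‖u t x‖ ^ 2 := fun t => integral_nonneg fun x => by positivity
  have hn2 : ∀ t, 0 ≤ ∫ x : ℝ, ‖deriv (u t) x‖ ^ 2 := fun t => integral_nonneg fun x => by positivity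
  have hn3 : ∀ t, 0 ≤ ∫ x : ℝ, (v t x) ^ 2 := fun t => integral_nonneg fun x => by positivity
  have hn4 : ∀ t, 0 ≤ ∫ x : ℝ, (deriv (v t) x) ^ 2 := fun t => integral_nonneg fun x => by positivity
  obtain ⟨i, hi⟩ : ∃ i : ℝ → ℝ, i = fun t => (a * lam₁ t)⁻¹ := ⟨_, rfl⟩
  obtain ⟨j, hj⟩ : ∃ j : ℝ → ℝ, j = fun t => (b * lam₁ t ^ p₂)⁻¹ := ⟨_, rfl⟩
  obtain ⟨h, hh⟩ : ∃ h : ℝ → ℝ, h = fun t => (η t)⁻¹ := ⟨_, rfl⟩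
  obtain ⟨B, hB⟩ := SKdV.time_main (v := v) (w := fun t x => ‖u t x‖ ^ 2) (M := C) hv
    (fun t => (hux t).norm_sq ℝ) (fun t x => by positivity) hγ heq
    (fun t R hR => (SKdV.local_mass (hvi t) (fun x => by positivity) hR).trans (by
      linarith [hC t, hn1 t, hn2 t, hn3 t, hn4 t]))
    (fun t R hR => (SKdV.local_mass (hui t) (fun x => by positivity) hR).trans (by
      linarith [hC t, hn1 t, hn2 t, hn3 t, hn4 t]))
    p₁ q₁ p₂ hq₁ hp₂ hp₁ hp₁' a b ha hb lam₁ η i j h (funext hlam₁) (funext hη) hi hj hh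
  have hlm : Measurable lam₁ := by
    rw [funext hlam₁]
    exact (measurable_id.pow_const p₁).div (Real.measurable_log.pow_const q₁)
  have hηm : Measurable η := by
    rw [funext hη]
    exact (measurable_id.pow_const _).mul (Real.measurable_log.pow_const _)
  have him : Measurable i := by rw [hi]; fun_prop
  have hjm : Measurable j := by
    rw [hj]; exact ((hlm.pow_const p₂).const_mul b).inv
  have hhm : Measurable h := by rw [hh]; exact hηm.inv
  have hvm := hv.continuous.measurable
  have hum := hu.continuous.measurable
  have hrm := SKdV.r_cont.measurable
  have hlpos : ∀ t, 10 ≤ t → 0 < lam₁ t := by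
    intro t ht
    have := SKdV.log_ten ht
    have : 0 < t := by linarith
    rw [hlam₁]; positivity
  have hηpos : ∀ t, 10 ≤ t → 0 < η t := by
    intro t ht
    have := SKdV.log_ten ht
    have : 0 < t := by linarith
    rw [hη]; positivity
  set c := 4 * a * (2 + 1 / (-γ)) with hc
  have hγ' : 0 < -γ := by linarith
  have hc0 : 0 < c := by positivity
  set φ : ℝ → ℝ → ℝ := fun t x => (1 / 2 * v t x ^ 2 - γ * ‖u t x‖ ^ 2) *
    (SKdV.r (x * i t) * SKdV.r (x * j t)) with hφ
  have hφ0 : ∀ t x, 0 ≤ φ t x := by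
    intro t x
    have h1 := SKdV.r_pos (x * i t)
    have h2 := SKdV.r_pos (x * j t)
    have h3 : 0 ≤ 1 / 2 * v t x ^ 2 - γ * ‖u t x‖ ^ 2 := by
      nlinarith [sq_nonneg (v t x), sq_nonneg ‖u t x‖]
    simp only [hφ]; positivity
  set g : ℝ × ℝ → ENNReal := fun z => ENNReal.ofReal (c * (h z.1 * i z.1) * φ z.1 z.2) with hg
  have hgm : Measurable g := by
    simp only [hg, hφ]
    apply Measurable.ennreal_ofReal
    have m1 : Measurable fun z : ℝ × ℝ => SKdV.r (z.2 * i z.1) := by fun_prop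
    have m2 : Measurable fun z : ℝ × ℝ => SKdV.r (z.2 * j z.1) := by fun_prop
    have m3 : Measurable fun z : ℝ × ℝ => c * (h z.1 * i z.1) := by fun_prop
    exact m3.mul ((((hvm.pow_const 2).const_mul (1 / 2)).sub
      ((hum.norm.pow_const 2).const_mul γ)).mul (m1.mul m2))
  have hfin : ∫⁻ t in Set.Ici (10 : ℝ), ∫⁻ x, g (t, x) ≤ ENNReal.ofReal c * ENNReal.ofReal B := by
    apply SKdV.exhaust hgm
    intro N hN
    calc _ = ∫⁻ t in Set.Ioc 10 N, ENNReal.ofReal c *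
          ENNReal.ofReal (h t * (i t * ∫ x in (-N)..N, φ t x)) := by
          apply setLIntegral_congr_fun measurableSet_Ioc
          intro t ht
          have ht' : 10 ≤ t := ht.1.le
          have hl := hlpos t ht'
          have he := hηpos t ht'
          have hi0 : 0 < i t := by rw [hi]; simp only; positivity
          have hh0 : 0 < h t := by rw [hh]; simp only; positivity
          have cv := (hvx t).continuous
          have cu := (hux t).continuous
          have cr := SKdV.r_cont
          have hcφ : Continuous fun x => c * (h t * i t) * φ t x := by
            simp only [hφ]; fun_prop
          simp only [hg]
          rw [← ofReal_integral_eq_lintegral_ofReal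
            (hcφ.integrableOn_Ioc)
            (Eventually.of_forall fun x => by
              have := hφ0 t x
              simp only [Pi.zero_apply]
              positivity), ← ENNReal.ofReal_mul hc0.le, integral_const_mul,
            intervalIntegral.integral_of_le (by linarith)]
          congr 1; ring
      _ = ENNReal.ofReal c * ∫⁻ t in Set.Ioc 10 N,
          ENNReal.ofReal (h t * (i t * ∫ x in (-N)..N, φ t x)) := by
          rw [lintegral_const_mul' _ _ ENNReal.ofReal_ne_top]
      _ ≤ _ := by
          gcongr
          exact hB N hN
  refine lt_of_le_of_lt ?_ (lt_of_le_of_lt hfin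
    (ENNReal.mul_lt_top ENNReal.ofReal_lt_top ENNReal.ofReal_lt_top))
  apply setLIntegral_mono' measurableSet_Ici
  intro t ht
  have ht' : 10 ≤ t := ht
  have hl := hlpos t ht'
  have he := hηpos t ht'
  rw [← integral_const_mul]
  refine (SKdV.ofReal_int_le ?_).trans ?_
  · intro x
    have := Real.cosh_pos (x / (a * lam₁ t))
    have := Real.cosh_pos (x / (b * lam₂ t))
    positivity
  · apply lintegral_mono
    intro x
    apply ENNReal.ofReal_le_ofReal
    have e1 : x / (a * lam₁ t) = x * i t := by rw [hi]; simp only; rw [div_eq_mul_inv]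
    have e2 : x / (b * lam₂ t) = x * j t := by rw [hj, hlam₂]; simp only; rw [div_eq_mul_inv]
    have e3 : 1 / (η t * lam₁ t) = a * (h t * i t) := by
      rw [hh, hi]; simp only; field_simp
    have hi0 : 0 < i t := by rw [hi]; simp only; positivity
    have hh0 : 0 < h t := by rw [hh]; simp only; positivity
    rw [e1, e2, e3]
    have s1 := SKdV.sech_le (x * i t)
    have s2 := SKdV.sech_le (x * j t)
    have r1 := SKdV.r_pos (x * i t)
    have r2 := SKdV.r_pos (x * j t)
    have c1 := Real.cosh_pos (x * i t)
    have c2 := Real.cosh_pos (x * j t)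
    have key : v t x ^ 2 + ‖u t x‖ ^ 2 ≤ (2 + 1 / (-γ)) * (1 / 2 * v t x ^ 2 - γ * ‖u t x‖ ^ 2) := by
      have z1 : 0 ≤ 1 / (-γ) * v t x ^ 2 := by positivity
      have z2 : 0 ≤ (-γ) * ‖u t x‖ ^ 2 := by positivity
      have z3 : 1 / (-γ) * (-γ * ‖u t x‖ ^ 2) = ‖u t x‖ ^ 2 := by
        rw [← mul_assoc, one_div_mul_cancel hγ'.ne', one_mul]
      nlinarith
    calc a * (h t * i t) * ((v t x ^ 2 + ‖u t x‖ ^ 2) * (1 / Real.cosh (x * i t)) *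
          (1 / Real.cosh (x * j t)))
        ≤ a * (h t * i t) * (((2 + 1 / (-γ)) * (1 / 2 * v t x ^ 2 - γ * ‖u t x‖ ^ 2)) *
          (2 * SKdV.r (x * i t)) * (2 * SKdV.r (x * j t))) := by
          have hz := le_trans (by positivity : 0 ≤ v t x ^ 2 + ‖u t x‖ ^ 2) key
          gcongr
      _ = _ := by simp only [hc, hφ]; ring
end
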